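/- arXiv:2112.00472 — 8 statements merged into one kernel-verified Lean document; each statement's English description precedes it below -/
import Mathlib

section
/- Let p ≥ 5 be a prime and q a prime number. Let a and b be integers with (1/(2p))·q^{p/(p−2)} < a, b < (1/(2p) + 1/(2^p·p^p))·q^{p/(p−2)} (inequalities of real numbers). Set g(a,b) = Σ_{i=0}^{p−1} a^{p−1−i} b^{i} and f_q(a,b) = 2(a^p + b^p)q^p − (a−b)²q^{2p} − g(a,b)². Suppose that D := f_q(a,b) is squarefree, that D ≥ 4·a·b^{(p−1)/2}·q^{(p+1)/2}, and that ((2p² − 1)/(2p)^p)·q^{p(p−1)/(p−2)} > p. Then the ideal class group of the imaginary quadratic field ℚ(√−D) contains a subgroup isomorphic to (ℤ/pℤ) × (ℤ/pℤ). -/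
open scoped BigOperators

/-- `g(a,b) = Σ_{i=0}^{p−1} a^{p−1−i} b^{i}`. -/
def gPoly (p : ℕ) (a b : ℤ) : ℤ := ∑ i ∈ Finset.range p, a ^ (p - 1 - i) * b ^ i

/-- `f_q(a,b) = 2(a^p + b^p)q^p − (a−b)²q^{2p} − g(a,b)²`. -/
def fPoly (p : ℕ) (q a b : ℤ) : ℤ :=
  2 * (a ^ p + b ^ p) * q ^ p - (a - b) ^ 2 * q ^ (2 * p) - (gPoly p a b) ^ 2

open NumberField

lemma aux_form {K : Type} [Field K] [NumberField K] (α : K) (D : ℤ) (hα : α ^ 2 = -((D : ℤ) : K))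
    (hgen : Algebra.adjoin ℚ {α} = ⊤) (z : K) : ∃ u v : ℚ, z = (u : K) + v * α := by
  have hz : z ∈ Algebra.adjoin ℚ {α} := by rw [hgen]; trivial
  induction hz using Algebra.adjoin_induction with
  | mem x hx => exact ⟨0, 1, by simpa using hx⟩
  | algebraMap r => exact ⟨r, 0, by simp⟩
  | add x y _ _ hx hy =>
    obtain ⟨u, v, rfl⟩ := hx
    obtain ⟨u', v', rfl⟩ := hy
    exact ⟨u + u', v + v', by push_cast; ring⟩
  | mul x y _ _ hx hy =>
    obtain ⟨u, v, rfl⟩ := hx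
    obtain ⟨u', v', rfl⟩ := hy
    refine ⟨u * u' - D * v * v', u * v' + v * u', ?_⟩
    push_cast
    linear_combination (v * v' : K) * hα

lemma aux_sigma {K : Type} [Field K] [NumberField K] (α : K) (D : ℤ) (hD : 0 < D)
    (hα : α ^ 2 = -((D : ℤ) : K))
    (hgen : Algebra.adjoin ℚ {α} = ⊤) : ∃ σ : K →ₐ[ℚ] K, σ α = -α := by
  have hint : IsIntegral ℚ α := Algebra.IsIntegral.isIntegral α
  have hmin : minpoly ℚ α = Polynomial.X ^ 2 + Polynomial.C (D : ℚ) := by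
    symm
    have hm : (Polynomial.X ^ 2 + Polynomial.C (D : ℚ)).Monic := by monicity!
    apply minpoly.eq_of_irreducible_of_monic
    · rw [hm.irreducible_iff_roots_eq_zero_of_degree_le_three]
      · rw [Multiset.eq_zero_iff_forall_notMem]
        intro x hx
        rw [Polynomial.mem_roots hm.ne_zero] at hx
        simp at hx
        have : (0:ℚ) < D := by exact_mod_cast hD
        nlinarith [sq_nonneg x]
      · have : (Polynomial.X ^ 2 + Polynomial.C (D : ℚ)).natDegree = 2 := by compute_degree!
        omega
      · have : (Polynomial.X ^ 2 + Polynomial.C (D : ℚ)).natDegree = 2 := by compute_degree!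
        omega
    · simp [hα]
    · exact hm
  let pb := PowerBasis.ofAdjoinEqTop hint hgen
  have hg : pb.gen = α := PowerBasis.ofAdjoinEqTop_gen hint hgen
  have h : Polynomial.aeval (-α) (minpoly ℚ pb.gen) = 0 := by
    rw [hg, hmin]; simp [hα]
  refine ⟨pb.lift (-α) h, ?_⟩
  have := pb.lift_gen (-α) h
  rwa [hg] at this

lemma aux_int {K : Type} [Field K] [NumberField K] (r : ℚ) (h : IsIntegral ℤ (r : K)) :
    ∃ n : ℤ, r = n := by
  have h2 : IsIntegral ℤ (algebraMap ℚ K r) := by simpa using h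
  rw [isIntegral_algebraMap_iff (algebraMap ℚ K).injective] at h2
  obtain ⟨n, hn⟩ := IsIntegrallyClosed.isIntegral_iff.mp h2
  exact ⟨n, by simpa using hn.symm⟩

lemma aux_sq (D : ℤ) (hsf : Squarefree D) (w : ℚ) (M : ℤ) (h : D * w ^ 2 = M) :
    ∃ n : ℤ, w = n := by
  have h1 : D * w.num ^ 2 = M * (w.den : ℤ) ^ 2 := by
    have hd : (w.den : ℚ) ≠ 0 := by exact_mod_cast w.den_ne_zero
    have h3 : w * w.den = w.num := Rat.mul_den_eq_num w
    have : (D : ℚ) * (w.num : ℚ) ^ 2 = M * (w.den : ℚ) ^ 2 := by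
      rw [← h, ← h3]; ring
    exact_mod_cast this
  have hc : IsCoprime ((w.den : ℤ) ^ 2) (w.num ^ 2) := by
    apply IsCoprime.pow
    rw [Int.isCoprime_iff_gcd_eq_one, Int.gcd_comm]
    exact w.reduced
  have h2 : (w.den : ℤ) ^ 2 ∣ D := hc.dvd_of_dvd_mul_right (Dvd.intro_left M h1.symm)
  have h4 := hsf (w.den : ℤ) (by rwa [← sq])
  have h5 : w.den = 1 := by
    have := Int.isUnit_iff.mp h4
    have := w.den_pos
    omega
  exact ⟨w.num, (Rat.coe_int_num_of_den_eq_one h5).symm⟩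

lemma aux_fix {K : Type} [Field K] [NumberField K] (α : K) (D : ℤ) (hD : 0 < D)
    (hsf : Squarefree D) (hα : α ^ 2 = -((D : ℤ) : K))
    (hgen : Algebra.adjoin ℚ {α} = ⊤) (σ : K →ₐ[ℚ] K) (hσ : σ α = -α)
    (z : 𝓞 K) : ∃ N : ℤ, 0 ≤ N ∧ (z : K) * σ z = N ∧ (4 * N ≤ D → σ z = z) := by
  obtain ⟨u, v, huv⟩ := aux_form α D hα hgen (z : K)
  have hs : σ (z : K) = (u : K) - v * α := by
    rw [huv]; simp [hσ]; ring
  have hzi : IsIntegral ℤ (z : K) := z.isIntegral_coe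
  have hsi : IsIntegral ℤ (σ (z : K)) := hzi.map (σ.restrictScalars ℤ)
  obtain ⟨m, hm⟩ := aux_int (K := K) (2 * u) (by
    have := hzi.add hsi
    rw [hs] at this
    rw [huv] at this
    refine (congrArg (IsIntegral ℤ) ?_).mpr this
    push_cast; ring)
  obtain ⟨N, hN⟩ := aux_int (K := K) (u ^ 2 + D * v ^ 2) (by
    have := hzi.mul hsi
    rw [hs] at this
    rw [huv] at this
    refine (congrArg (IsIntegral ℤ) ?_).mpr this
    push_cast; linear_combination (v ^ 2 : K) * hα)
  obtain ⟨n, hn⟩ := aux_sq D hsf (2 * v) (4 * N - m ^ 2) (by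
    push_cast; rw [← hN, ← hm]; ring)
  have hmn : m ^ 2 + D * n ^ 2 = 4 * N := by
    have : (m : ℚ) ^ 2 + D * n ^ 2 = 4 * N := by
      rw [← hm, ← hn, ← hN]; ring
    exact_mod_cast this
  refine ⟨N, by nlinarith [sq_nonneg m, sq_nonneg n], ?_, ?_⟩
  · rw [hs, huv]
    have : ((u ^ 2 + D * v ^ 2 : ℚ) : K) = ((N : ℚ) : K) := by rw [hN]
    push_cast at this
    rw [← this]; linear_combination -(v ^ 2 : K) * hα
  · intro hle
    have hn0 : n = 0 := by
      by_contra hne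
      have h1 : 1 ≤ n ^ 2 := by
        have := sq_nonneg n
        have : n ^ 2 ≠ 0 := pow_ne_zero 2 hne
        omega
      have h2 : D * n ^ 2 ≥ D := by nlinarith
      have h3 : D = 4 * N := by nlinarith [sq_nonneg m]
      have := Int.isUnit_iff.mp (hsf 2 ⟨N, by rw [h3]; ring⟩)
      omega
    have hv : v = 0 := by rw [hn0] at hn; simpa using hn
    rw [hs, huv, hv]; simp

lemma aux_span {K : Type} [Field K] [NumberField K] (m n : ℤ) (hm : 0 ≤ m) (hn : 0 ≤ n)
    (h : Ideal.span {(m : 𝓞 K)} = Ideal.span {(n : 𝓞 K)}) : m = n := by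
  have h2 := congrArg Ideal.absNorm h
  rw [Ideal.absNorm_span_singleton, Ideal.absNorm_span_singleton] at h2
  have e (k : ℤ) : Algebra.norm ℤ (k : 𝓞 K) = k ^ Module.finrank ℤ (𝓞 K) := by
    simpa using Algebra.norm_algebraMap (S := 𝓞 K) k
  rw [e, e, Int.natAbs_pow, Int.natAbs_pow] at h2
  have := Nat.pow_left_injective (by
    show Module.finrank ℤ (𝓞 K) ≠ 0
    exact Module.finrank_pos.ne') h2
  omega

/-- data of an ideal with a conjugate -/
structure ConjIdeal {K : Type} [Field K] [NumberField K] (s : 𝓞 K →+* 𝓞 K)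
    (I : Ideal (𝓞 K)) (A : ℤ) : Prop where
  cop : IsCoprime I (I.map s)
  nrm : I * I.map s = Ideal.span {(A : 𝓞 K)}

lemma aux_prin {K : Type} [Field K] [NumberField K] (α : K) (D : ℤ) (hD : 0 < D)
    (hsf : Squarefree D) (hα : α ^ 2 = -((D : ℤ) : K))
    (hgen : Algebra.adjoin ℚ {α} = ⊤) (σ : K →ₐ[ℚ] K) (hσ : σ α = -α)
    (I J : Ideal (𝓞 K)) (A B : ℤ) (hA : 0 ≤ A) (hB : 0 ≤ B)
    (hI : ConjIdeal (RingOfIntegers.mapRingHom (σ : K →+* K)) I A)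
    (hJ : ConjIdeal (RingOfIntegers.mapRingHom (σ : K →+* K)) J B) (k : ℕ)
    (hle : 4 * (A * B ^ k) ≤ D) (hpr : (I * J ^ k).IsPrincipal) : A = B ^ k := by
  set s := RingOfIntegers.mapRingHom (σ : K →+* K) with hs
  obtain ⟨z, hz⟩ := hpr
  change _ = Ideal.span {z} at hz
  obtain ⟨N, hN0, hN, hfix⟩ := aux_fix α D hD hsf hα hgen σ hσ z
  have hz2 : I.map s * J.map s ^ k = Ideal.span {s z} := by
    rw [← Ideal.map_pow, ← Ideal.map_mul, hz, Ideal.map_span, Set.image_singleton]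
  have hzs : z * s z = (N : 𝓞 K) := by
    ext
    push_cast
    exact hN
  have hspan : Ideal.span {((A * B ^ k : ℤ) : 𝓞 K)} = Ideal.span {(N : 𝓞 K)} := by
    rw [← hzs, ← Ideal.span_singleton_mul_span_singleton, ← hz, ← hz2]
    push_cast
    rw [← Ideal.span_singleton_mul_span_singleton, ← Ideal.span_singleton_pow, ← hI.nrm, ← hJ.nrm]
    ring
  have hNe := aux_span _ _ (by positivity) hN0 hspan
  have hsz : s z = z := by
    ext
    exact hfix (by omega)
  rw [hsz, ← hz] at hz2
  have hck : IsCoprime (J ^ k) (J.map s ^ k) := hJ.cop.pow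
  have d1 : I ∣ J.map s ^ k := hI.cop.dvd_of_dvd_mul_left (hz2 ▸ Dvd.intro _ rfl)
  have d2 : J.map s ^ k ∣ I := hck.symm.dvd_of_dvd_mul_right (hz2 ▸ Dvd.intro_left _ rfl)
  have d3 : I.map s ∣ J ^ k := hI.cop.symm.dvd_of_dvd_mul_left (hz2 ▸ Dvd.intro _ rfl)
  have d4 : J ^ k ∣ I.map s := hck.dvd_of_dvd_mul_right (hz2.symm ▸ Dvd.intro_left _ rfl)
  have e1 : I = J.map s ^ k := dvd_antisymm d1 d2
  have e2 : I.map s = J ^ k := dvd_antisymm d3 d4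
  apply aux_span (K := K) _ _ hA (by positivity)
  rw [← hI.nrm]
  push_cast
  rw [← Ideal.span_singleton_pow, ← hJ.nrm, e2, mul_pow]
  conv_lhs => rw [e1]
  ring

lemma aux_exists {K : Type} [Field K] [NumberField K] (α : K) (D : ℤ)
    (hsf : Squarefree D) (hα : α ^ 2 = -((D : ℤ) : K))
    (σ : K →ₐ[ℚ] K) (hσ : σ α = -α) (p : ℕ) (hp : 2 ≤ p) (x A : ℤ)
    (hx : x ^ 2 + D = 4 * A ^ p) (hA : 0 < A) :
    ∃ I : Ideal (𝓞 K), ConjIdeal (RingOfIntegers.mapRingHom (σ : K →+* K)) I A ∧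
      (I ^ p).IsPrincipal := by
  set s := RingOfIntegers.mapRingHom (σ : K →+* K) with hs
  have hxK : (x : K) ^ 2 + D = 4 * A ^ p := by exact_mod_cast hx
  have hint : IsIntegral ℤ (((x : K) + α) / 2) := by
    refine ⟨Polynomial.X ^ 2 - Polynomial.C x * Polynomial.X + Polynomial.C (A ^ p), by monicity!, ?_⟩
    rw [Polynomial.eval₂_add, Polynomial.eval₂_sub, Polynomial.eval₂_mul, Polynomial.eval₂_C,
      Polynomial.eval₂_C, Polynomial.eval₂_pow, Polynomial.eval₂_X]
    simp only [map_pow, eq_intCast]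
    linear_combination (1 / 4 : K) * hα - (1 / 4 : K) * hxK
  obtain ⟨β, hβ⟩ : ∃ β : 𝓞 K, algebraMap (𝓞 K) K β = ((x : K) + α) / 2 := ⟨⟨_, hint⟩, rfl⟩
  have hsβ : algebraMap (𝓞 K) K (s β) = ((x : K) - α) / 2 := by
    change σ (algebraMap (𝓞 K) K β) = _
    rw [hβ, map_div₀, map_add, hσ, map_intCast, map_ofNat]; ring
  have hadd : β + s β = (x : 𝓞 K) := by
    apply FaithfulSMul.algebraMap_injective (𝓞 K) K
    simp only [map_add, map_mul, map_pow, map_intCast, hβ, hsβ]; ring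
  have hmul : β * s β = (A : 𝓞 K) ^ p := by
    apply FaithfulSMul.algebraMap_injective (𝓞 K) K
    simp only [map_add, map_mul, map_pow, map_intCast, hβ, hsβ]
    linear_combination (-1 / 4 : K) * hα + (1 / 4 : K) * hxK
  have hcop : IsCoprime x A := by
    by_contra hne
    rw [Int.isCoprime_iff_gcd_eq_one] at hne
    obtain ⟨r, hr, hrd⟩ := Nat.exists_prime_and_dvd hne
    have h1 : (r : ℤ) ∣ x := (Int.natCast_dvd_natCast.mpr hrd).trans (Int.gcd_dvd_left _ _)
    have h2 : (r : ℤ) ∣ A := (Int.natCast_dvd_natCast.mpr hrd).trans (Int.gcd_dvd_right _ _)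
    have h3 : (r : ℤ) * r ∣ D := by
      have : D = 4 * A ^ p - x ^ 2 := by omega
      rw [this, ← sq]
      exact dvd_sub (((pow_dvd_pow_of_dvd h2 2).trans (pow_dvd_pow A hp)).mul_left 4) (pow_dvd_pow_of_dvd h1 2)
    have := Int.isUnit_iff.mp (hsf _ h3)
    have := hr.two_le
    omega
  obtain ⟨u, v, huv⟩ := (hcop.pow_right (n := p))
  have hcβ : IsCoprime β (s β) := by
    refine ⟨u + v * s β, u, ?_⟩
    have : ((u * x + v * A ^ p : ℤ) : 𝓞 K) = 1 := by rw [huv]; simp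
    push_cast at this
    rw [← this, ← hmul, ← hadd]; ring
  have hcI : IsCoprime (Ideal.span {β}) (Ideal.span {s β}) := by
    rw [Ideal.isCoprime_span_singleton_iff]; exact hcβ
  have hmI : Ideal.span {β} * Ideal.span {s β} = Ideal.span {(A : 𝓞 K)} ^ p := by
    rw [Ideal.span_singleton_mul_span_singleton, hmul, Ideal.span_singleton_pow]
  obtain ⟨I, hI⟩ := exists_eq_pow_of_mul_eq_pow_of_coprime hcI hmI
  have hI' : Ideal.span {s β} = (I.map s) ^ p := by
    rw [← Ideal.map_pow, ← hI, Ideal.map_span, Set.image_singleton]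
  refine ⟨I, ⟨?_, ?_⟩, ?_⟩
  · rw [hI, hI'] at hcI
    exact (IsCoprime.pow_iff (by omega) (by omega)).mp hcI
  · rw [hI, hI', ← mul_pow] at hmI
    exact pow_left_injective (show p ≠ 0 by omega) hmI
  · rw [← hI]; exact ⟨β, rfl⟩

lemma aux_group {G : Type*} [CommGroup G] (p : ℕ) (hp : p.Prime) (x y : G)
    (hx : x ^ p = 1) (hy : y ^ p = 1) (hy1 : y ≠ 1)
    (h : ∀ k : ℤ, k.natAbs ≤ p / 2 → x * y ^ k ≠ 1) :
    ∃ H : Subgroup G, Nonempty (H ≃* Multiplicative (ZMod p × ZMod p)) := by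
  have : Fact p.Prime := ⟨hp⟩
  let fx : ZMod p →+ Additive G := ZMod.lift p ⟨zmultiplesHom _ (Additive.ofMul x), by
    simp [← ofMul_pow, hx]⟩
  let fy : ZMod p →+ Additive G := ZMod.lift p ⟨zmultiplesHom _ (Additive.ofMul y), by
    simp [← ofMul_pow, hy]⟩
  have hfx (n : ℤ) : fx n = n • Additive.ofMul x := by simp [fx]
  have hfy (n : ℤ) : fy n = n • Additive.ofMul y := by simp [fy]
  let F : ZMod p × ZMod p →+ Additive G := fx.coprod fy
  have hF : Function.Injective F := by
    rw [injective_iff_map_eq_zero]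
    rintro ⟨m, n⟩ hmn
    have hmul : ∀ c : ZMod p, F (c * m, c * n) = 0 := by
      intro c
      obtain ⟨c, rfl⟩ := ZMod.intCast_surjective c
      have : ((c : ZMod p) * m, (c : ZMod p) * n) = c • (m, n) := by simp
      rw [this, map_zsmul, hmn, smul_zero]
    by_cases hm : m = 0
    · by_cases hn : n = 0
      · simp [hm, hn]
      · exfalso
        have := hmul n⁻¹
        rw [hm, inv_mul_cancel₀ hn] at this
        have h1 := hfy 1
        simp [F] at this h1
        rw [this] at h1
        exact hy1 (by simpa using h1.symm)
    · exfalso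
      have := hmul m⁻¹
      rw [inv_mul_cancel₀ hm] at this
      set k := (m⁻¹ * n).valMinAbs with hk
      have hkk : ((k : ℤ) : ZMod p) = m⁻¹ * n := ZMod.coe_valMinAbs _
      rw [← hkk] at this
      have h1 := hfx 1
      simp only [F, AddMonoidHom.coprod_apply, hfy] at this
      simp only [Int.cast_one] at h1
      rw [h1, one_smul] at this
      exact h k (ZMod.natAbs_valMinAbs_le _) this
  let F' : Multiplicative (ZMod p × ZMod p) →* G := AddMonoidHom.toMultiplicativeLeft F
  have hF' : Function.Injective F' := hF
  exact ⟨F'.range, ⟨(MonoidHom.ofInjective hF').symm⟩⟩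

lemma aux_conj {K : Type} [Field K] [NumberField K] (α : K) (D : ℤ)
    (hα : α ^ 2 = -((D : ℤ) : K))
    (hgen : Algebra.adjoin ℚ {α} = ⊤) (σ : K →ₐ[ℚ] K) (hσ : σ α = -α)
    (J : Ideal (𝓞 K)) (B : ℤ)
    (hJ : ConjIdeal (RingOfIntegers.mapRingHom (σ : K →+* K)) J B) :
    ConjIdeal (RingOfIntegers.mapRingHom (σ : K →+* K))
      (J.map (RingOfIntegers.mapRingHom (σ : K →+* K))) B := by
  set s := RingOfIntegers.mapRingHom (σ : K →+* K) with hs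
  have hss : s.comp s = RingHom.id _ := by
    ext z
    change σ (σ (z : K)) = (z : K)
    obtain ⟨u, v, huv⟩ := aux_form α D hα hgen (z : K)
    rw [huv]; simp [hσ]
  have hJJ : (J.map s).map s = J := by
    rw [Ideal.map_map, hss, Ideal.map_id]
  refine ⟨?_, ?_⟩
  · rw [hJJ]; exact hJ.cop.symm
  · rw [hJJ, mul_comm]; exact hJ.nrm

lemma gPoly_mul (p : ℕ) (a b : ℤ) : (a - b) * gPoly p a b = a ^ p - b ^ p := by
  have h : gPoly p a b = ∑ i ∈ Finset.range p, b ^ i * a ^ (p - 1 - i) := by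
    unfold gPoly
    exact Finset.sum_congr rfl fun i _ => mul_comm _ _
  have := (Commute.all b a).mul_geom_sum₂ p
  rw [h]; linarith

lemma gPoly_self (p : ℕ) (a : ℤ) : gPoly p a a = p * a ^ (p - 1) := by
  unfold gPoly
  rw [Finset.sum_congr rfl (g := fun _ => a ^ (p - 1))]
  · simp
  · intro i hi
    rw [← pow_add]
    congr 1
    have := Finset.mem_range.mp hi
    omega

lemma aux_real (p q : ℕ) (hp5 : 5 ≤ p) (hq : q.Prime) (a b : ℤ)
    (ha1 : (1 / (2 * (p : ℝ))) * (q : ℝ) ^ ((p : ℝ) / ((p : ℝ) - 2)) < (a : ℝ))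
    (ha2 : (a : ℝ) < (1 / (2 * (p : ℝ)) + 1 / (2 ^ p * (p : ℝ) ^ p)) *
      (q : ℝ) ^ ((p : ℝ) / ((p : ℝ) - 2)))
    (hb1 : (1 / (2 * (p : ℝ))) * (q : ℝ) ^ ((p : ℝ) / ((p : ℝ) - 2)) < (b : ℝ))
    (hbig : (p : ℝ) < ((2 * (p : ℝ) ^ 2 - 1) / (2 * (p : ℝ)) ^ p) *
      (q : ℝ) ^ (((p : ℝ) * ((p : ℝ) - 1)) / ((p : ℝ) - 2))) :
    0 < a ∧ 0 < b ∧ a < 2 * b ∧ a ≠ 1 := by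
  have hqR : (0 : ℝ) < q := by exact_mod_cast hq.pos
  have hpR : (5 : ℝ) ≤ p := by exact_mod_cast hp5
  have hpow : (q : ℝ) ^ (((p : ℝ) * ((p : ℝ) - 1)) / ((p : ℝ) - 2)) =
      ((q : ℝ) ^ ((p : ℝ) / ((p : ℝ) - 2))) ^ (p - 1) := by
    rw [← Real.rpow_natCast, ← Real.rpow_mul hqR.le]
    congr 1
    rw [Nat.cast_sub (by omega)]
    push_cast
    ring
  rw [hpow] at hbig
  have ht : 0 < (q : ℝ) ^ ((p : ℝ) / ((p : ℝ) - 2)) := Real.rpow_pos_of_pos hqR _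
  generalize (q : ℝ) ^ ((p : ℝ) / ((p : ℝ) - 2)) = t at *
  have hc : 0 < 1 / (2 * (p : ℝ)) := by positivity
  have hct : 0 < 1 / (2 * (p : ℝ)) * t := by positivity
  have h1 : 1 / (2 ^ p * (p : ℝ) ^ p) ≤ 1 / (2 * (p : ℝ)) := by
    apply one_div_le_one_div_of_le (by positivity)
    rw [← mul_pow]
    exact le_self_pow₀ (by linarith) (by omega)
  have h2 : 1 / (2 ^ p * (p : ℝ) ^ p) * t ≤ 1 / (2 * (p : ℝ)) * t :=
    mul_le_mul_of_nonneg_right h1 ht.le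
  refine ⟨by exact_mod_cast hct.trans ha1, by exact_mod_cast hct.trans hb1, ?_, ?_⟩
  · have : (a : ℝ) < 2 * b := by rw [add_mul] at ha2; linarith
    exact_mod_cast this
  · rintro rfl
    have h3 : t < 2 * p := by
      have : 0 < 2 * (p : ℝ) := by positivity
      rw [one_div, inv_mul_lt_iff₀ this] at ha1
      simpa using ha1
    have h4 : t ^ (p - 1) ≤ (2 * (p : ℝ)) ^ (p - 1) := pow_le_pow_left₀ ht.le h3.le _
    have h5 : (2 * (p : ℝ)) ^ p = (2 * (p : ℝ)) ^ (p - 1) * (2 * p) := by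
      rw [← pow_succ]; congr 1; omega
    have h6 : (0:ℝ) < (2 * (p : ℝ)) ^ (p - 1) := by positivity
    rw [h5, div_mul_eq_mul_div, lt_div_iff₀ (by positivity)] at hbig
    have h7 : (2 * (p : ℝ) ^ 2 - 1) * t ^ (p - 1) ≤ (2 * (p : ℝ) ^ 2 - 1) * (2 * (p : ℝ)) ^ (p - 1) :=
      mul_le_mul_of_nonneg_left h4 (by nlinarith)
    nlinarith

theorem stmt_1 (p q : ℕ) (hp : p.Prime) (hp5 : 5 ≤ p) (hq : q.Prime) (a b : ℤ)
    (ha1 : (1 / (2 * (p : ℝ))) * (q : ℝ) ^ ((p : ℝ) / ((p : ℝ) - 2)) < (a : ℝ))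
    (ha2 : (a : ℝ) < (1 / (2 * (p : ℝ)) + 1 / (2 ^ p * (p : ℝ) ^ p)) *
      (q : ℝ) ^ ((p : ℝ) / ((p : ℝ) - 2)))
    (hb1 : (1 / (2 * (p : ℝ))) * (q : ℝ) ^ ((p : ℝ) / ((p : ℝ) - 2)) < (b : ℝ))
    (hb2 : (b : ℝ) < (1 / (2 * (p : ℝ)) + 1 / (2 ^ p * (p : ℝ) ^ p)) *
      (q : ℝ) ^ ((p : ℝ) / ((p : ℝ) - 2)))
    (hsf : Squarefree (fPoly p (q : ℤ) a b))
    (hbound : 4 * a * b ^ ((p - 1) / 2) * (q : ℤ) ^ ((p + 1) / 2) ≤ fPoly p (q : ℤ) a b)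
    (hbig : (p : ℝ) < ((2 * (p : ℝ) ^ 2 - 1) / (2 * (p : ℝ)) ^ p) *
      (q : ℝ) ^ (((p : ℝ) * ((p : ℝ) - 1)) / ((p : ℝ) - 2)))
    (K : Type) [Field K] [NumberField K] (α : K)
    (hα : α ^ 2 = -((fPoly p (q : ℤ) a b : ℤ) : K))
    (hgen : Algebra.adjoin ℚ {α} = ⊤) :
    ∃ H : Subgroup (ClassGroup (NumberField.RingOfIntegers K)),
      Nonempty (H ≃* Multiplicative (ZMod p × ZMod p)) := by
  obtain ⟨ha, hb, hab2, hane⟩ := aux_real p q hp5 hq a b ha1 ha2 hb1 hbig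
  have hq2 : (2 : ℤ) ≤ q := by exact_mod_cast hq.two_le
  have hne : a ≠ b := by
    rintro rfl
    have : a * a ∣ fPoly p q a a := by
      unfold fPoly
      rw [gPoly_self]
      obtain ⟨n, rfl⟩ : ∃ n, p = n + 2 := ⟨p - 2, by omega⟩
      refine ⟨4 * a ^ n * q ^ (n + 2) - (n + 2 : ℕ) ^ 2 * a ^ n * a ^ n, ?_⟩
      rw [show n + 2 - 1 = n + 1 by omega]
      ring
    have := Int.isUnit_iff.mp (hsf a this)
    omega
  have hodd : (p + 1) / 2 = (p - 1) / 2 + 1 := by omega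
  have hx1 : ((a - b) * (q : ℤ) ^ p + gPoly p a b) ^ 2 + fPoly p q a b = 4 * (a * q) ^ p := by
    unfold fPoly
    rw [mul_pow, pow_mul']
    linear_combination 2 * (q : ℤ) ^ p * gPoly_mul p a b
  have hx2 : ((a - b) * (q : ℤ) ^ p - gPoly p a b) ^ 2 + fPoly p q a b = 4 * (b * q) ^ p := by
    unfold fPoly
    rw [mul_pow, pow_mul']
    linear_combination -2 * (q : ℤ) ^ p * gPoly_mul p a b
  generalize fPoly p (q : ℤ) a b = D at *
  have hbd : ∀ k ≤ (p - 1) / 2, 4 * ((a * q) * (b * q) ^ k) ≤ D := by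
    intro k hk
    refine le_trans ?_ hbound
    have e : 4 * a * b ^ ((p - 1) / 2) * (q : ℤ) ^ ((p + 1) / 2) =
      4 * ((a * q) * (b * q) ^ ((p - 1) / 2)) := by rw [hodd, mul_pow]; ring
    rw [e]
    have : (b * q) ^ k ≤ (b * (q : ℤ)) ^ ((p - 1) / 2) := pow_le_pow_right₀ (by nlinarith) hk
    have h0 : 0 < a * (q : ℤ) := by positivity
    have := mul_le_mul_of_nonneg_left this h0.le
    linarith
  have haq : 0 < a * (q : ℤ) := by positivity
  have hbq : 0 < b * (q : ℤ) := by positivity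
  have hD : 0 < D := by
    have := hbd 0 (by omega)
    simp at this
    linarith
  obtain ⟨σ, hσ⟩ := aux_sigma α D hD hα hgen
  obtain ⟨I, hI, hIp⟩ := aux_exists α D hsf hα σ hσ p (by omega) _ _ hx1 haq
  obtain ⟨J, hJ, hJp⟩ := aux_exists α D hsf hα σ hσ p (by omega) _ _ hx2 hbq
  have hJ' := aux_conj α D hα hgen σ hσ J _ hJ
  set s := RingOfIntegers.mapRingHom (σ : K →+* K) with hs
  have hnz : ∀ (I : Ideal (𝓞 K)) (A : ℤ), 0 < A → ConjIdeal s I A → I ≠ 0 := by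
    rintro I A hA h rfl
    have := h.nrm
    rw [zero_mul] at this
    have h2 := Ideal.span_singleton_eq_bot.mp this.symm
    have : A = 0 := by exact_mod_cast h2
    omega
  let I0 : nonZeroDivisors (Ideal (𝓞 K)) := ⟨I, mem_nonZeroDivisors_of_ne_zero (hnz I _ haq hI)⟩
  let J0 : nonZeroDivisors (Ideal (𝓞 K)) := ⟨J, mem_nonZeroDivisors_of_ne_zero (hnz J _ hbq hJ)⟩
  let J1 : nonZeroDivisors (Ideal (𝓞 K)) :=
    ⟨J.map s, mem_nonZeroDivisors_of_ne_zero (hnz _ _ hbq hJ')⟩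
  have hJ01 : ClassGroup.mk0 J0 * ClassGroup.mk0 J1 = 1 := by
    rw [← map_mul, ClassGroup.mk0_eq_one_iff]
    change (J * J.map s).IsPrincipal
    rw [hJ.nrm]
    exact ⟨_, rfl⟩
  have hfin : ∀ k ≤ (p - 1) / 2, a * q ≠ (b * (q : ℤ)) ^ k := by
    intro k hk h
    rcases k with _ | _ | k
    · simp at h
      nlinarith
    · simp at h
      rcases h with h | h
      · exact hne h
      · omega
    · have h2 : (b * (q : ℤ)) ^ 2 ≤ (b * q) ^ (k + 1 + 1) :=
        pow_le_pow_right₀ (by nlinarith) (by omega)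
      have h3 : 2 ≤ b * (q : ℤ) := by nlinarith
      have h4 : 2 * (b * (q : ℤ)) ≤ (b * q) ^ 2 := by nlinarith
      have h5 : a * (q : ℤ) < 2 * b * q := by nlinarith
      linarith
  have hk2 : p / 2 = (p - 1) / 2 := by
    have := hp.eq_two_or_odd
    omega
  apply aux_group p hp (ClassGroup.mk0 I0) (ClassGroup.mk0 J0)
  · rw [← map_pow, ClassGroup.mk0_eq_one_iff]; exact hIp
  · rw [← map_pow, ClassGroup.mk0_eq_one_iff]; exact hJp
  · intro h
    rw [ClassGroup.mk0_eq_one_iff] at h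
    have h1 := aux_prin α D hD hsf hα hgen σ hσ J J _ _ hbq.le hbq.le hJ hJ 0 (by
      have := hbd 1 (by omega)
      have h3 : 1 ≤ a * (q : ℤ) := haq
      rw [pow_one] at this
      rw [pow_zero, mul_one]
      nlinarith) (by simpa using h)
    rw [pow_zero] at h1
    nlinarith
  · intro k hk h
    rw [hk2] at hk
    obtain ⟨n, rfl | rfl⟩ := k.eq_nat_or_neg
    · simp only [Int.natAbs_natCast] at hk
      rw [zpow_natCast, ← map_pow, ← map_mul, ClassGroup.mk0_eq_one_iff] at h
      exact hfin n hk (aux_prin α D hD hsf hα hgen σ hσ I J _ _ haq.le hbq.le hI hJ n (hbd n hk) h)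
    · simp only [Int.natAbs_neg, Int.natAbs_natCast] at hk
      rw [zpow_neg, ← inv_zpow, inv_eq_of_mul_eq_one_right hJ01, zpow_natCast, ← map_pow,
        ← map_mul, ClassGroup.mk0_eq_one_iff] at h
      exact hfin n hk (aux_prin α D hD hsf hα hgen σ hσ I (J.map s) _ _ haq.le hbq.le hI hJ' n
        (hbd n hk) h)
end

section
/- Let p be an odd prime and let D be a squarefree positive integer with D ≡ 3 (mod 4). Let X, Y be integers with X² − 4Y^p = −D and Y > 0. Let K = ℚ(√−D) with ring of integers 𝓞_K. Then X is odd, (X + √−D)/2 ∈ 𝓞_K, and there exists an ideal 𝔞 of 𝓞_K such that 𝔞^p equals the principal ideal generated by (X + √−D)/2 and the absolute norm of 𝔞 equals Y. -/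
theorem stmt_4 (p : ℕ) (hp : p.Prime) (hodd : Odd p) (D : ℕ) (hD : Squarefree D)
    (hDpos : 0 < D) (hD3 : D % 4 = 3) (X Y : ℤ)
    (h : X ^ 2 - 4 * Y ^ p = -(D : ℤ)) (hY : 0 < Y)
    (K : Type) [Field K] [NumberField K] (α : K)
    (hα : α ^ 2 = -(D : K)) (hgen : Algebra.adjoin ℚ {α} = ⊤) :
    Odd X ∧
    ∃ x : NumberField.RingOfIntegers K,
      algebraMap (NumberField.RingOfIntegers K) K x = ((X : K) + α) / 2 ∧
      ∃ 𝔞 : Ideal (NumberField.RingOfIntegers K),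
        𝔞 ^ p = Ideal.span {x} ∧ (Ideal.absNorm 𝔞 : ℤ) = Y := by
  have hXodd : Odd X := by
    by_contra hX
    rw [Int.not_odd_iff_even] at hX
    obtain ⟨k, rfl⟩ := hX
    have : (D : ℤ) = 4 * (Y ^ p - k ^ 2) := by linarith
    omega
  refine ⟨hXodd, ?_⟩
  have hK : (X : K) ^ 2 - 4 * (Y : K) ^ p = -(D : K) := by exact_mod_cast congrArg (Int.cast : ℤ → K) h
  have hint : ∀ β : K, β ^ 2 = -(D : K) → IsIntegral ℤ (((X : K) + β) / 2) := by
    intro β hβ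
    refine ⟨Polynomial.X ^ 2 - Polynomial.C X * Polynomial.X + Polynomial.C (Y ^ p), ?_, ?_⟩
    · monicity!
    · simp only [Polynomial.eval₂_add, Polynomial.eval₂_sub, Polynomial.eval₂_mul, Polynomial.eval₂_C,
        Polynomial.eval₂_X, Polynomial.eval₂_pow]
      simp only [eq_intCast, Int.cast_pow]
      linear_combination (1 / 4 : K) * hβ - (1 / 4 : K) * hK
  obtain ⟨x, hx⟩ : ∃ x : NumberField.RingOfIntegers K,
      algebraMap (NumberField.RingOfIntegers K) K x = ((X : K) + α) / 2 := ⟨⟨_, hint α hα⟩, rfl⟩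
  obtain ⟨y, hy⟩ : ∃ x : NumberField.RingOfIntegers K,
      algebraMap (NumberField.RingOfIntegers K) K x = ((X : K) + -α) / 2 :=
    ⟨⟨_, hint (-α) (by rw [neg_sq, hα])⟩, rfl⟩
  have hxy : x * y = (Y : NumberField.RingOfIntegers K) ^ p := by
    apply FaithfulSMul.algebraMap_injective (NumberField.RingOfIntegers K) K
    simp only [map_mul, map_add, map_sub, map_pow, map_neg, map_intCast, map_natCast, hx, hy]
    linear_combination (1 / 4 : K) * hK - (1 / 4 : K) * hα
  have hadd : x + y = (X : NumberField.RingOfIntegers K) := by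
    apply FaithfulSMul.algebraMap_injective (NumberField.RingOfIntegers K) K
    simp only [map_mul, map_add, map_sub, map_pow, map_neg, map_intCast, map_natCast, hx, hy]
    ring
  have hsub : (x - y) ^ 2 = -(D : NumberField.RingOfIntegers K) := by
    apply FaithfulSMul.algebraMap_injective (NumberField.RingOfIntegers K) K
    simp only [map_mul, map_add, map_sub, map_pow, map_neg, map_intCast, map_natCast, hx, hy]
    linear_combination hα
  have hcop : IsCoprime X (D : ℤ) := by
    rw [Int.isCoprime_iff_gcd_eq_one]
    by_contra hne
    obtain ⟨q, hq, hqd⟩ := Nat.exists_prime_and_dvd hne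
    have hqX : (q : ℤ) ∣ X := (Int.natCast_dvd_natCast.2 hqd).trans (Int.gcd_dvd_left ..)
    have hqD : (q : ℤ) ∣ D := (Int.natCast_dvd_natCast.2 hqd).trans (Int.gcd_dvd_right ..)
    have hqp : Prime (q : ℤ) := Nat.prime_iff_prime_int.1 hq
    have hqY : (q : ℤ) ∣ Y := by
      have h4 : (q : ℤ) ∣ 4 * Y ^ p := by
        have : 4 * Y ^ p = X ^ 2 + D := by linarith
        rw [this]
        exact dvd_add (dvd_pow hqX two_ne_zero) hqD
      rcases hqp.dvd_or_dvd h4 with h4 | h4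
      · exfalso
        have h2 : (q : ℤ) ∣ 2 := hqp.dvd_of_dvd_pow (n := 2) (by norm_num; exact h4)
        have h2' : q ∣ 2 := by exact_mod_cast h2
        have := (Nat.prime_dvd_prime_iff_eq hq Nat.prime_two).1 h2'
        subst this
        omega
      · exact hqp.dvd_of_dvd_pow h4
    have hsq : (q : ℤ) * q ∣ D := by
      have : (D : ℤ) = 4 * Y ^ p - X ^ 2 := by linarith
      rw [this, ← sq]
      exact dvd_sub (Dvd.dvd.mul_left ((pow_dvd_pow_of_dvd hqY 2).trans (pow_dvd_pow _ hp.two_le)) _)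
        (pow_dvd_pow_of_dvd hqX 2)
    have hsq' : q * q ∣ D := by exact_mod_cast hsq
    exact hq.not_isUnit (hD q hsq')
  have hcop' : IsCoprime x y := by
    obtain ⟨u, v, huv⟩ := hcop
    have huv' : (u : NumberField.RingOfIntegers K) * X + v * D = 1 := by
      exact_mod_cast congrArg (Int.cast : ℤ → NumberField.RingOfIntegers K) huv
    refine ⟨u - v * (x - y), u + v * (x - y), ?_⟩
    linear_combination huv' + u * hadd - v * hsub
  obtain ⟨I, hI⟩ := exists_eq_pow_of_mul_eq_pow_of_coprime
    (a := Ideal.span {x}) (b := Ideal.span {y})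
    (c := Ideal.span {(Y : NumberField.RingOfIntegers K)}) (n := p)
    ((Ideal.isCoprime_span_singleton_iff x y).2 hcop')
    (by rw [Ideal.span_singleton_mul_span_singleton, hxy, Ideal.span_singleton_pow])
  refine ⟨x, hx, I, hI.symm, ?_⟩
  have hnorm : Algebra.norm ℚ (algebraMap (NumberField.RingOfIntegers K) K x) = (Y : ℚ) ^ p := by
    have hQ : (X : ℚ) ^ 2 - 4 * (Y : ℚ) ^ p = -(D : ℚ) := by exact_mod_cast congrArg (Int.cast : ℤ → ℚ) h
    have hDQ : (0 : ℚ) < D := by exact_mod_cast hDpos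
    let f : Polynomial ℚ := Polynomial.X ^ 2 - Polynomial.C (X : ℚ) * Polynomial.X
      + Polynomial.C ((Y : ℚ) ^ p)
    have hfm : f.Monic := by unfold f; monicity!
    have hfd : f.natDegree = 2 := by unfold f; compute_degree!
    have hfi : Irreducible f := by
      rw [hfm.irreducible_iff_roots_eq_zero_of_degree_le_three (by omega) (by omega)]
      rw [Multiset.eq_zero_iff_forall_notMem]
      intro t ht
      have h0 := Polynomial.isRoot_of_mem_roots ht
      simp [f] at h0
      nlinarith [sq_nonneg (2 * t - X)]
    have hfx : Polynomial.aeval (algebraMap (NumberField.RingOfIntegers K) K x) f = 0 := by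
      simp [f, hx]
      linear_combination (1 / 4 : K) * hα - (1 / 4 : K) * hK
    have hmin := minpoly.eq_of_irreducible_of_monic hfi hfx hfm
    have htop : Algebra.adjoin ℚ {(algebraMap (NumberField.RingOfIntegers K) K x)} = ⊤ := by
      rw [eq_top_iff, ← hgen, Algebra.adjoin_le_iff, Set.singleton_subset_iff]
      have : α = (2 : ℚ) • (algebraMap (NumberField.RingOfIntegers K) K x) - algebraMap ℚ K X := by
        rw [hx, Algebra.smul_def]; simp; ring
      rw [this]
      exact sub_mem (Subalgebra.smul_mem _ (Algebra.self_mem_adjoin_singleton ℚ _) _)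
        (Subalgebra.algebraMap_mem ..)
    have hxi : IsIntegral ℚ (algebraMap (NumberField.RingOfIntegers K) K x) := ⟨f, hfm, hfx⟩
    have := Algebra.PowerBasis.norm_gen_eq_coeff_zero_minpoly (PowerBasis.ofAdjoinEqTop hxi htop)
    rw [PowerBasis.ofAdjoinEqTop_gen, ← PowerBasis.natDegree_minpoly, PowerBasis.ofAdjoinEqTop_gen, ← hmin, hfd] at this
    rw [this, Polynomial.coeff_zero_eq_eval_zero]
    simp [f]
  have hnZ : Algebra.norm ℤ x = Y ^ p := by
    have := Algebra.coe_norm_int x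
    rw [hnorm] at this
    exact_mod_cast this
  have hN : (Ideal.absNorm I : ℤ) ^ p = Y ^ p := by
    have h1 := congrArg Ideal.absNorm hI
    rw [Ideal.absNorm_span_singleton, hnZ, map_pow] at h1
    rw [← Nat.cast_pow, ← h1, Int.natCast_natAbs, abs_of_pos (pow_pos hY p)]
  exact (pow_left_inj₀ (by positivity) hY.le hp.ne_zero).1 hN
end

section
/- Let p be an odd prime and let D be a squarefree positive integer with D ≡ 3 (mod 4). Let X, Y be integers with X² − 4Y^p = −D, Y > 0, and D + 1 > 4Y. Then the ideal class group of K = ℚ(√−D) contains an element of order p. -/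
lemma aux_rat (D : ℕ) (hD : Squarefree D) (t : ℚ) (m : ℤ) (h : (D : ℚ) * t ^ 2 = m) :
    ∃ b : ℤ, t = b := by
  have hd : (t.den : ℚ) ≠ 0 := by exact_mod_cast t.den_nz
  have h1 : (D : ℤ) * t.num ^ 2 = m * (t.den : ℤ) ^ 2 := by
    have : (D : ℚ) * t.num ^ 2 = m * (t.den : ℚ) ^ 2 := by
      rw [← h]
      have := Rat.mul_den_eq_num t
      rw [← this]; ring
    exact_mod_cast this
  have hc : IsCoprime (t.den : ℤ) t.num := by
    rw [Int.isCoprime_iff_gcd_eq_one, Int.gcd_comm]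
    exact t.reduced
  have h2 : (t.den : ℤ) ^ 2 ∣ (D : ℤ) := by
    have : (t.den : ℤ) ^ 2 ∣ (D : ℤ) * t.num ^ 2 := ⟨m, by rw [h1]; ring⟩
    exact (hc.pow).dvd_of_dvd_mul_right this
  have h3 : t.den * t.den ∣ D := by
    rw [← sq]; exact_mod_cast h2
  have h4 : t.den = 1 := Nat.isUnit_iff.mp (hD _ h3)
  exact ⟨t.num, ((Rat.den_eq_one_iff t).mp h4).symm⟩

lemma aux_int_s5 (q : ℚ) (h : IsIntegral ℤ (q : ℂ)) : ∃ n : ℤ, q = n := by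
  have h1 : IsIntegral ℤ q := by
    have : IsIntegral ℤ (algebraMap ℚ ℂ q) := by simpa using h
    exact (isIntegral_algebraMap_iff (algebraMap ℚ ℂ).injective).mp this
  obtain ⟨n, hn⟩ := IsIntegrallyClosed.isIntegral_iff.mp h1
  exact ⟨n, by simpa using hn.symm⟩

/-- Shape of an integral element under a complex embedding. -/
lemma aux_shape (D : ℕ) (hD : Squarefree D)
    {K : Type} [Field K] [NumberField K] (α : K)
    (hα : α ^ 2 = -(D : K)) (hgen : Algebra.adjoin ℚ {α} = ⊤) (φ : K →+* ℂ)
    (z : NumberField.RingOfIntegers K) :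
    ∃ a b n : ℤ, 2 * φ z = a + b * φ α ∧ Complex.normSq (φ z) = n ∧ a ^ 2 + D * b ^ 2 = 4 * n := by
  have hw : (φ α) ^ 2 = -(D : ℂ) := by rw [← map_pow, hα]; simp
  have hrep : ∀ x : K, ∃ r s : ℚ, x = r + s * α := by
    intro x
    have hx : x ∈ Algebra.adjoin ℚ {α} := by rw [hgen]; trivial
    induction hx using Algebra.adjoin_induction with
    | mem x hx => exact ⟨0, 1, by simpa using hx⟩
    | algebraMap r => exact ⟨r, 0, by simp⟩
    | add x y _ _ hx hy =>
      obtain ⟨r, s, rfl⟩ := hx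
      obtain ⟨r', s', rfl⟩ := hy
      exact ⟨r + r', s + s', by push_cast; ring⟩
    | mul x y _ _ hx hy =>
      obtain ⟨r, s, rfl⟩ := hx
      obtain ⟨r', s', rfl⟩ := hy
      exact ⟨r * r' - D * s * s', r * s' + r' * s, by
        push_cast; linear_combination (s * s' : K) * hα⟩
  have hre : (φ α).re * (φ α).im = 0 ∧ (φ α).re ^ 2 - (φ α).im ^ 2 = -D := by
    have h1 := congrArg Complex.re hw
    have h2 := congrArg Complex.im hw
    simp [sq] at h1 h2
    constructor <;> nlinarith
  have hre0 : (φ α).re = 0 := by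
    rcases mul_eq_zero.mp hre.1 with h | h
    · exact h
    · have := hre.2
      rw [h] at this
      have : (0 : ℝ) ≤ D := by positivity
      nlinarith
  have him : (φ α).im ^ 2 = D := by have := hre.2; rw [hre0] at this; linarith
  obtain ⟨r, s, hz⟩ := hrep z
  have hφ : φ z = r + s * φ α := by rw [hz]; simp
  have hzi : IsIntegral ℤ (φ z) :=
    (NumberField.RingOfIntegers.isIntegral_coe z).map (φ.toIntAlgHom)
  have hzc : IsIntegral ℤ (starRingEnd ℂ (φ z)) :=
    hzi.map ((starRingEnd ℂ).toIntAlgHom)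
  have hN : Complex.normSq (φ z) = r ^ 2 + D * s ^ 2 := by
    rw [hφ, Complex.normSq_apply]
    simp [hre0]
    linear_combination (s ^ 2 : ℝ) * him
  obtain ⟨a, ha⟩ : ∃ a : ℤ, 2 * r = a := by
    apply aux_int_s5
    have := hzi.add hzc
    rw [Complex.add_conj] at this
    have e : ((2 * r : ℚ) : ℂ) = ((2 * (φ z).re : ℝ) : ℂ) := by
      rw [hφ]
      simp [hre0]
    rw [e]; exact this
  obtain ⟨n, hn⟩ : ∃ n : ℤ, r ^ 2 + D * s ^ 2 = n := by
    apply aux_int_s5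
    have := hzi.mul hzc
    rw [Complex.mul_conj, hN] at this
    have e : ((r ^ 2 + D * s ^ 2 : ℚ) : ℂ) = ((r ^ 2 + D * s ^ 2 : ℝ) : ℂ) := by
      push_cast
      rfl
    rw [e]; exact this
  obtain ⟨b, hb⟩ := aux_rat D hD (2 * s) (4 * n - a ^ 2) (by
    push_cast; rw [← ha, ← hn]; ring)
  refine ⟨a, b, n, ?_, ?_, ?_⟩
  · have h1 : (2 : ℂ) * r = a := by exact_mod_cast ha
    have h2 : (2 : ℂ) * s = b := by exact_mod_cast hb
    rw [hφ, ← h1, ← h2]; ring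
  · rw [hN]; exact_mod_cast hn
  · have : (a : ℚ) ^ 2 + D * b ^ 2 = 4 * n := by rw [← ha, ← hb, ← hn]; ring
    exact_mod_cast this

theorem stmt_5 (p : ℕ) (hp : p.Prime) (hodd : Odd p) (D : ℕ) (hD : Squarefree D)
    (hDpos : 0 < D) (hD3 : D % 4 = 3) (X Y : ℤ)
    (h : X ^ 2 - 4 * Y ^ p = -(D : ℤ)) (hY : 0 < Y) (hbig : (D : ℤ) + 1 > 4 * Y)
    (K : Type) [Field K] [NumberField K] (α : K)
    (hα : α ^ 2 = -(D : K)) (hgen : Algebra.adjoin ℚ {α} = ⊤) :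
    ∃ c : ClassGroup (NumberField.RingOfIntegers K), orderOf c = p := by
  have hcop : IsCoprime X Y := by
    rw [Int.isCoprime_iff_gcd_eq_one]
    by_contra hne
    obtain ⟨q, hq, hqd⟩ := Nat.exists_prime_and_dvd hne
    have hqX : (q : ℤ) ∣ X := (Int.natCast_dvd_natCast.mpr hqd).trans (Int.gcd_dvd_left ..)
    have hqY : (q : ℤ) ∣ Y := (Int.natCast_dvd_natCast.mpr hqd).trans (Int.gcd_dvd_right ..)
    have h1 : (q : ℤ) ^ 2 ∣ X ^ 2 := pow_dvd_pow_of_dvd hqX 2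
    have h2 : (q : ℤ) ^ 2 ∣ Y ^ p := (pow_dvd_pow_of_dvd hqY 2).trans (pow_dvd_pow _ hp.two_le)
    have h3 : (q : ℤ) ^ 2 ∣ (D : ℤ) := by
      have : (D : ℤ) = 4 * Y ^ p - X ^ 2 := by linarith
      rw [this]
      exact dvd_sub (h2.mul_left 4) h1
    have h4 : q * q ∣ D := by rw [← sq]; exact_mod_cast h3
    exact hq.one_lt.ne' (Nat.isUnit_iff.mp (hD _ h4))
  have hXα : (X : K) ^ 2 - 4 * (Y : K) ^ p = - D := by exact_mod_cast congrArg (Int.cast : ℤ → K) h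
  have hint : IsIntegral ℤ (((X : K) + α) / 2) := by
    refine ⟨Polynomial.X ^ 2 - Polynomial.C X * Polynomial.X + Polynomial.C (Y ^ p), by monicity!, ?_⟩
    rw [← Polynomial.aeval_def]
    simp only [map_add, map_sub, map_mul, map_pow, Polynomial.aeval_X, Polynomial.aeval_C,
      map_intCast, eq_intCast]
    linear_combination (hα - hXα) / 4
  obtain ⟨θ, hθ⟩ : ∃ θ : NumberField.RingOfIntegers K, (θ : K) = ((X : K) + α) / 2 :=
    ⟨⟨_, hint⟩, rfl⟩
  obtain ⟨θ', hθ'⟩ : ∃ θ' : NumberField.RingOfIntegers K, θ' = X - θ := ⟨_, rfl⟩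
  have hmul : θ * θ' = (Y : NumberField.RingOfIntegers K) ^ p := by
    apply NumberField.RingOfIntegers.ext
    rw [hθ']
    simp [hθ]
    linear_combination (hXα - hα) / 4
  have hcoθ : IsCoprime θ θ' := by
    obtain ⟨u, v, huv⟩ := hcop.pow_right (n := p)
    have huv' : (u : NumberField.RingOfIntegers K) * X + v * Y ^ p = 1 := by
      exact_mod_cast congrArg (Int.cast : ℤ → NumberField.RingOfIntegers K) huv
    refine ⟨u + v * θ', u, ?_⟩
    have : (X : NumberField.RingOfIntegers K) = θ + θ' := by rw [hθ']; ring
    rw [← huv', ← hmul, this]; ring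
  have hY0 : (Y : NumberField.RingOfIntegers K) ≠ 0 := by exact_mod_cast hY.ne'
  have hθ0 : θ ≠ 0 := by
    rintro rfl
    rw [zero_mul] at hmul
    exact pow_ne_zero p hY0 hmul.symm
  obtain ⟨I, hI⟩ : ∃ I : Ideal (NumberField.RingOfIntegers K), Ideal.span {θ} = I ^ p := by
    classical
    have hm : Ideal.span {θ} * Ideal.span {θ'} =
        (Ideal.span {(Y : NumberField.RingOfIntegers K)}) ^ p := by
      rw [Ideal.span_singleton_mul_span_singleton, hmul, Ideal.span_singleton_pow]
    have hu : IsCoprime (Ideal.span {θ}) (Ideal.span {θ'}) :=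
      (Ideal.isCoprime_span_singleton_iff _ _).mpr hcoθ
    exact exists_eq_pow_of_mul_eq_pow_of_coprime hu hm
  have hI0 : I ≠ ⊥ := by
    rintro rfl
    rw [← Ideal.zero_eq_bot, zero_pow hp.ne_zero, Ideal.zero_eq_bot, Ideal.span_singleton_eq_bot] at hI
    exact hθ0 hI
  have hIm : I ∈ nonZeroDivisors (Ideal (NumberField.RingOfIntegers K)) :=
    mem_nonZeroDivisors_of_ne_zero hI0
  refine ⟨ClassGroup.mk0 ⟨I, hIm⟩, ?_⟩
  haveI := Fact.mk hp
  refine orderOf_eq_prime ?_ ?_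
  · rw [← map_pow, ClassGroup.mk0_eq_one_iff]
    simp only [SubmonoidClass.mk_pow]
    rw [← hI]
    exact ⟨⟨θ, rfl⟩⟩
  · rw [ne_eq, ClassGroup.mk0_eq_one_iff]
    rintro ⟨β, hβ⟩
    change I = Ideal.span {β} at hβ
    rw [hβ, Ideal.span_singleton_pow, Ideal.span_singleton_eq_span_singleton] at hI
    obtain ⟨u, hu⟩ := hI.symm
    obtain ⟨φ⟩ : Nonempty (K →+* ℂ) := inferInstance
    obtain ⟨a, b, n, h1, h2, h3⟩ := aux_shape D hD α hα hgen φ β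
    obtain ⟨a₁, b₁, n₁, h4, h5, h6⟩ := aux_shape D hD α hα hgen φ u
    obtain ⟨a₂, b₂, n₂, -, h8, -⟩ := aux_shape D hD α hα hgen φ (u⁻¹ : (NumberField.RingOfIntegers K)ˣ)
    obtain ⟨a₃, b₃, n₃, h10, h11, h12⟩ := aux_shape D hD α hα hgen φ θ
    have hw : (φ α) ^ 2 = -(D : ℂ) := by rw [← map_pow, hα]; simp
    have hD7 : 4 < D := by omega
    have hφθ : 2 * φ θ = X + φ α := by
      have e : 2 * (θ : K) = X + α := by rw [hθ]; ring
      have e2 := congrArg φ e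
      rw [map_mul, map_add, map_ofNat, map_intCast] at e2
      exact e2
    -- `φ α` has nonzero imaginary part
    have him : (φ α).im ≠ 0 := by
      intro hi
      have h1 := congrArg Complex.re hw
      simp [sq, hi] at h1
      have : (0 : ℝ) < D := by exact_mod_cast hDpos
      nlinarith [mul_self_nonneg (φ α).re]
    have hre : (φ α).re = 0 := by
      have h2 := congrArg Complex.im hw
      simp [sq] at h2
      grind
    have hcmp : ∀ a b : ℤ, ((2 : ℂ) * φ θ = a + b * φ α) → a = X ∧ b = 1 := by
      intro a b hab
      rw [hφθ] at hab
      have e1 := congrArg Complex.re hab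
      have e2 := congrArg Complex.im hab
      simp [hre] at e1 e2
      constructor
      · exact_mod_cast e1.symm
      · have : (b : ℝ) = 1 := mul_right_cancel₀ him (by linarith)
        exact_mod_cast this
    obtain ⟨rfl, rfl⟩ := hcmp _ _ h10
    have hn3 : n₃ = Y ^ p := by linarith
    have hnn : ∀ (z : NumberField.RingOfIntegers K) (n : ℤ), Complex.normSq (φ z) = n → 0 ≤ n := by
      intro z n hz
      have := Complex.normSq_nonneg (φ z)
      rw [hz] at this
      exact_mod_cast this
    have hn1 : n₁ = 1 := by
      have e : φ (u : NumberField.RingOfIntegers K) *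
          φ ((u⁻¹ : (NumberField.RingOfIntegers K)ˣ) : NumberField.RingOfIntegers K) = 1 := by
        rw [← map_mul, ← map_mul, Units.mul_inv, map_one, map_one]
      have e2 := congrArg Complex.normSq e
      rw [map_mul, h5, h8, map_one] at e2
      have e3 : n₁ * n₂ = 1 := by exact_mod_cast e2
      exact Int.eq_one_of_mul_eq_one_right (hnn _ _ h5) e3
    have hφu : φ θ = φ β ^ p * φ (u : NumberField.RingOfIntegers K) := by
      rw [← hu]; simp
    have hn : n = Y := by
      have e2 := congrArg Complex.normSq hφu
      rw [map_mul, map_pow, h2, h5, h11, hn1, hn3] at e2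
      have e3 : Y ^ p = n ^ p := by
        have : (Y : ℝ) ^ p = n ^ p := by simpa using e2
        exact_mod_cast this
      exact (pow_left_inj₀ (hnn _ _ h2) hY.le hp.ne_zero).mp e3.symm
    subst hn
    have hb1 : b₁ = 0 := by
      by_contra hb
      have : 0 < b₁ ^ 2 := by positivity
      have : (4 : ℤ) < D := by exact_mod_cast hD7
      nlinarith [sq_nonneg a₁]
    have hb : b = 0 := by
      by_contra hb
      have hb2 : 0 < b ^ 2 := by positivity
      have hDz : (4 : ℤ) < D := by exact_mod_cast hD7
      have ha : a = 0 := by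
        by_contra ha
        have : 0 < a ^ 2 := by positivity
        nlinarith
      have hb3 : b ^ 2 = 1 := by
        have := sq_nonneg a
        have : b ^ 2 < 2 := by nlinarith
        omega
      rw [ha, hb3] at h3
      omega
    rw [hb] at h1
    rw [hb1] at h4
    have i1 : φ β = ((a / 2 : ℝ) : ℂ) := by push_cast; linear_combination h1 / 2
    have i2 : φ (u : NumberField.RingOfIntegers K) = ((a₁ / 2 : ℝ) : ℂ) := by
      push_cast; linear_combination h4 / 2
    rw [i1, i2] at hφu
    have i3 : (φ θ).im = 0 := by
      rw [hφu, ← Complex.ofReal_pow, ← Complex.ofReal_mul, Complex.ofReal_im]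
    have i4 := congrArg Complex.im hφθ
    simp [i3] at i4
    exact him i4.symm
end

section
/- Let p ≥ 5 be a prime and let q ≥ 5 be a prime number. Then the two-variable polynomial f_q(X,Y) = 2(X^p + Y^p)q^p − (X − Y)²q^{2p} − (X^{p−1} + X^{p−2}Y + ⋯ + XY^{p−2} + Y^{p−1})² ∈ ℤ[X,Y] is squarefree as an element of ℚ[X,Y]. -/
open scoped BigOperators
open MvPolynomial

/-- `f_q(X,Y) = 2(X^p + Y^p)q^p − (X−Y)²q^{2p} − (X^{p−1} + X^{p−2}Y + ⋯ + Y^{p−1})²`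
as a polynomial in `ℚ[X,Y]`, where `X = X 0` and `Y = X 1`. -/
noncomputable def fMvQ (p q : ℕ) : MvPolynomial (Fin 2) ℚ :=
  2 * (X 0 ^ p + X 1 ^ p) * C (q : ℚ) ^ p - (X 0 - X 1) ^ 2 * C (q : ℚ) ^ (2 * p) -
    (∑ i ∈ Finset.range p, X 0 ^ (p - 1 - i) * X 1 ^ i) ^ 2

theorem aux_geom (p : ℕ) : (∑ i ∈ Finset.range p, (X 0 : MvPolynomial (Fin 2) ℚ) ^ (p - 1 - i) * X 1 ^ i) * (X 0 - X 1) = X 0 ^ p - X 1 ^ p := by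
  have h := geom_sum₂_mul (X 1 : MvPolynomial (Fin 2) ℚ) (X 0) p
  have e : (∑ i ∈ Finset.range p, (X 0 : MvPolynomial (Fin 2) ℚ) ^ (p - 1 - i) * X 1 ^ i)
      = ∑ i ∈ Finset.range p, X 1 ^ i * (X 0 : MvPolynomial (Fin 2) ℚ) ^ (p - 1 - i) :=
    Finset.sum_congr rfl fun i _ => mul_comm _ _
  rw [e]
  linear_combination -h

theorem aux_eval0 (p q : ℕ) (hp : Odd p) : eval ![-1, 0] (fMvQ p q) ≠ 0 := by
  have h := congrArg (eval ![(-1 : ℚ), 0]) (aux_geom p)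
  have hp0 : p ≠ 0 := by rintro rfl; simp at hp
  unfold fMvQ
  simp only [map_mul, map_sub, map_add, map_pow, eval_X, eval_C, map_ofNat] at h ⊢
  set s := eval ![(-1 : ℚ), 0] (∑ i ∈ Finset.range p, X 0 ^ (p - 1 - i) * X 1 ^ i)
  simp [hp.neg_one_pow, hp0] at h ⊢
  rw [h, pow_mul']
  have : (0:ℚ) ≤ (q:ℚ) ^ p := by positivity
  intro h'
  nlinarith

theorem aux_eval1 (p q : ℕ) (hp : Odd p) : eval ![0, -1] (fMvQ p q) ≠ 0 := by
  have h := congrArg (eval ![(0 : ℚ), -1]) (aux_geom p)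
  have hp0 : p ≠ 0 := by rintro rfl; simp at hp
  unfold fMvQ
  simp only [map_mul, map_sub, map_add, map_pow, eval_X, eval_C, map_ofNat] at h ⊢
  set s := eval ![(0 : ℚ), -1] (∑ i ∈ Finset.range p, X 0 ^ (p - 1 - i) * X 1 ^ i)
  simp [hp.neg_one_pow, hp0] at h ⊢
  rw [h, pow_mul']
  have : (0:ℚ) ≤ (q:ℚ) ^ p := by positivity
  intro h'
  nlinarith

theorem aux_noX (p q : ℕ) (hp : Odd p) (G : MvPolynomial (Fin 2) ℚ) (hG : Prime G)
    (hf : G ∣ fMvQ p q) (i : Fin 2) (h : G ∣ X i ^ p) : False := by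
  have h1 : G ∣ X i := hG.dvd_of_dvd_pow h
  have h2 : X i ∣ G := hG.irreducible.dvd_symm (X_prime (R := ℚ) (i := i)).irreducible h1
  obtain ⟨k, hk⟩ := h2.trans hf
  fin_cases i
  · apply aux_eval1 p q hp
    rw [hk]; simp
  · apply aux_eval0 p q hp
    rw [hk]; simp

/-- Euler operator -/
noncomputable def eulD : Derivation ℚ (MvPolynomial (Fin 2) ℚ) (MvPolynomial (Fin 2) ℚ) :=
  mkDerivation ℚ X

theorem aux_euler (p q : ℕ) (hp0 : p ≠ 0) : eulD (fMvQ p q) =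
    2 * (p : MvPolynomial (Fin 2) ℚ) * (X 0 ^ p + X 1 ^ p) * C (q : ℚ) ^ p -
      2 * (X 0 - X 1) ^ 2 * C (q : ℚ) ^ (2 * p) -
    2 * ((p : MvPolynomial (Fin 2) ℚ) - 1) * (∑ i ∈ Finset.range p, X 0 ^ (p - 1 - i) * X 1 ^ i) ^ 2 := by
  have hX : ∀ i, eulD (X i) = X i := fun i => by simp [eulD, mkDerivation_X]
  have hXp : ∀ i, eulD (X i ^ p) = (p : MvPolynomial (Fin 2) ℚ) * X i ^ p := fun i => by
    rw [Derivation.leibniz_pow, hX]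
    obtain ⟨n, rfl⟩ := Nat.exists_eq_succ_of_ne_zero hp0
    simp [pow_succ]
  have hC : ∀ n, eulD (C (q : ℚ) ^ n) = 0 := fun n => by
    rw [← C_pow]; exact eulD.map_algebraMap _
  have h2 : eulD (2 : MvPolynomial (Fin 2) ℚ) = 0 := by
    exact_mod_cast eulD.map_natCast 2
  have hS := congrArg eulD (aux_geom p)
  have hg := aux_geom p
  unfold fMvQ
  set S := ∑ i ∈ Finset.range p, (X 0 : MvPolynomial (Fin 2) ℚ) ^ (p - 1 - i) * X 1 ^ i
  have hne : (X 0 - X 1 : MvPolynomial (Fin 2) ℚ) ≠ 0 := by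
    intro h
    have := congrArg (eval ![(1:ℚ), 0]) h
    simp at this
  have hES : eulD S = ((p : MvPolynomial (Fin 2) ℚ) - 1) * S := by
    simp only [Derivation.leibniz, map_sub, hX, hXp, smul_eq_mul] at hS
    apply mul_right_cancel₀ hne
    linear_combination hS - (p : MvPolynomial (Fin 2) ℚ) * hg
  have hD : eulD ((X 0 - X 1) ^ 2) = 2 * (X 0 - X 1) ^ 2 := by
    rw [pow_two, Derivation.leibniz, map_sub, hX, hX, smul_eq_mul]
    ring
  simp only [map_sub, map_add, Derivation.leibniz, hD, pow_two S, hX, hXp, hC, h2, hES, smul_eq_mul]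
  ring

theorem stmt_6 (p q : ℕ) (hp : p.Prime) (hp5 : 5 ≤ p) (hq : q.Prime) (hq5 : 5 ≤ q) :
    Squarefree (fMvQ p q) := by
  have hodd : Odd p := hp.odd_of_ne_two (by omega)
  have hf0 : fMvQ p q ≠ 0 := fun h => aux_eval0 p q hodd (by rw [h]; simp)
  rw [squarefree_iff_irreducible_sq_not_dvd_of_ne_zero hf0]
  intro G hGi hGG
  have hG : Prime G := hGi.prime
  have hf : G ∣ fMvQ p q := (dvd_mul_right G G).trans hGG
  have hE : G ∣ eulD (fMvQ p q) := by
    obtain ⟨k, hk⟩ := hGG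
    rw [hk]
    simp only [Derivation.leibniz, smul_eq_mul]
    exact ⟨G * eulD k + 2 * k * eulD G, by ring⟩
  have unit : ∀ r : ℚ, r ≠ 0 → ∀ P, G ∣ C r * P → G ∣ P := fun r hr P h => by
    have := h.mul_left (C r⁻¹)
    rwa [← mul_assoc, ← C_mul, inv_mul_cancel₀ hr, C_1, one_mul] at this
  rw [aux_euler p q (by omega)] at hE
  have hf' := hf
  unfold fMvQ at hf'
  have hg := aux_geom p
  set S := ∑ i ∈ Finset.range p, (X 0 : MvPolynomial (Fin 2) ℚ) ^ (p - 1 - i) * X 1 ^ i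
  have hpc : (C (p : ℚ) : MvPolynomial (Fin 2) ℚ) = p := by simp
  have hp2 : (p : ℚ) - 2 ≠ 0 := by
    have : (5:ℚ) ≤ p := by exact_mod_cast hp5
    linarith
  have hc : (q : ℚ) ^ p ≠ 0 := pow_ne_zero _ (by exact_mod_cast hq.ne_zero)
  have hv : G ∣ X 0 ^ p + X 1 ^ p - C (q : ℚ) ^ p * (X 0 - X 1) ^ 2 := by
    apply unit (-(2 * ((p : ℚ) - 2) * (q : ℚ) ^ p))
      (neg_ne_zero.mpr (mul_ne_zero (mul_ne_zero two_ne_zero hp2) hc))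
    have h := dvd_sub hE (hf'.mul_left (2 * ((p : MvPolynomial (Fin 2) ℚ) - 1)))
    convert h using 1
    simp only [C_neg, C_mul, C_sub, hpc, C_pow, map_ofNat]
    ring
  have hu : G ∣ (S - C (q : ℚ) ^ p * (X 0 - X 1)) * (S + C (q : ℚ) ^ p * (X 0 - X 1)) := by
    have h := dvd_sub (hv.mul_left (2 * C (q : ℚ) ^ p)) hf'
    convert h using 1
    ring
  rcases hG.dvd_or_dvd hu with h | h
  · apply aux_noX p q hodd G hG hf 1
    apply unit 2 two_ne_zero
    have h := dvd_sub hv (h.mul_right (X 0 - X 1))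
    convert h using 1
    rw [map_ofNat]
    linear_combination hg
  · apply aux_noX p q hodd G hG hf 0
    apply unit 2 two_ne_zero
    have h := dvd_add hv (h.mul_right (X 0 - X 1))
    convert h using 1
    rw [map_ofNat]
    linear_combination -hg
end

section
/- Let p ≥ 5 be a prime and q a positive integer. Let a and b be integers with (1/(2p))·q^{p/(p−2)} < a, b < (1/(2p) + 1/(2^p·p^p))·q^{p/(p−2)} (inequalities of real numbers). Then |g(a,b) − (a−b)q^p| > ((2p² − 1)/(2p)^p)·q^{p(p−1)/(p−2)}, where g(a,b) = Σ_{i=0}^{p−1} a^{p−1−i} b^{i}. In particular, if ((2p² − 1)/(2p)^p)·q^{p(p−1)/(p−2)} ≥ p, then g(a,b) − (a−b)q^p ≠ p and g(a,b) − (a−b)q^p ≠ −p. -/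
open scoped BigOperators

theorem stmt_9 (p q : ℕ) (hp : p.Prime) (hp5 : 5 ≤ p) (hq : 0 < q) (a b : ℤ)
    (ha1 : (1 / (2 * (p : ℝ))) * (q : ℝ) ^ ((p : ℝ) / ((p : ℝ) - 2)) < (a : ℝ))
    (ha2 : (a : ℝ) < (1 / (2 * (p : ℝ)) + 1 / (2 ^ p * (p : ℝ) ^ p)) *
      (q : ℝ) ^ ((p : ℝ) / ((p : ℝ) - 2)))
    (hb1 : (1 / (2 * (p : ℝ))) * (q : ℝ) ^ ((p : ℝ) / ((p : ℝ) - 2)) < (b : ℝ))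
    (hb2 : (b : ℝ) < (1 / (2 * (p : ℝ)) + 1 / (2 ^ p * (p : ℝ) ^ p)) *
      (q : ℝ) ^ ((p : ℝ) / ((p : ℝ) - 2))) :
    ((2 * (p : ℝ) ^ 2 - 1) / (2 * (p : ℝ)) ^ p) *
        (q : ℝ) ^ (((p : ℝ) * ((p : ℝ) - 1)) / ((p : ℝ) - 2)) <
      |((gPoly p a b - (a - b) * (q : ℤ) ^ p : ℤ) : ℝ)| ∧
    ((p : ℝ) ≤ ((2 * (p : ℝ) ^ 2 - 1) / (2 * (p : ℝ)) ^ p) *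
        (q : ℝ) ^ (((p : ℝ) * ((p : ℝ) - 1)) / ((p : ℝ) - 2)) →
      gPoly p a b - (a - b) * (q : ℤ) ^ p ≠ (p : ℤ) ∧
      gPoly p a b - (a - b) * (q : ℤ) ^ p ≠ -(p : ℤ)) := by
  have hpR : (5:ℝ) ≤ (p:ℝ) := by exact_mod_cast hp5
  have hqR : (0:ℝ) < (q:ℝ) := by exact_mod_cast hq
  have hp2 : (p:ℝ) - 2 ≠ 0 := by linarith
  obtain ⟨Q, hQ⟩ : ∃ Q : ℝ, Q = (q : ℝ) ^ ((p : ℝ) / ((p : ℝ) - 2)) := ⟨_, rfl⟩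
  have hQ0 : 0 < Q := by rw [hQ]; exact Real.rpow_pos_of_pos hqR _
  have h1 : (q : ℝ) ^ (((p : ℝ) * ((p : ℝ) - 1)) / ((p : ℝ) - 2)) = Q ^ (p - 1) := by
    rw [hQ, ← Real.rpow_natCast, ← Real.rpow_mul hqR.le, Nat.cast_sub (by omega)]
    congr 1
    push_cast
    ring
  have h2 : (q : ℝ) ^ p = Q ^ (p - 2) := by
    rw [hQ, ← Real.rpow_natCast, ← Real.rpow_natCast, ← Real.rpow_mul hqR.le,
      Nat.cast_sub (by omega)]
    congr 1
    push_cast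
    field_simp
  rw [← hQ] at ha1 ha2 hb1 hb2
  rw [h1]
  have main : ((2 * (p : ℝ) ^ 2 - 1) / (2 * (p : ℝ)) ^ p) * Q ^ (p - 1) <
      |((gPoly p a b - (a - b) * (q : ℤ) ^ p : ℤ) : ℝ)| := by
    refine lt_of_lt_of_le ?_ (le_abs_self _)
    have hg : ((gPoly p a b : ℤ) : ℝ)
        = ∑ i ∈ Finset.range p, (a:ℝ) ^ (p - 1 - i) * (b:ℝ) ^ i := by
      simp [gPoly]
    have hc0 : 0 < (1 / (2 * (p : ℝ))) * Q := by positivity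
    have hge : (p:ℝ) * ((1 / (2 * (p : ℝ))) * Q) ^ (p - 1) ≤ ((gPoly p a b : ℤ) : ℝ) := by
      rw [hg]
      have : (p:ℝ) * ((1 / (2 * (p : ℝ))) * Q) ^ (p - 1)
          = ∑ i ∈ Finset.range p, ((1 / (2 * (p : ℝ))) * Q) ^ (p - 1) := by simp
      rw [this]
      apply Finset.sum_le_sum
      intro i hi
      have hi' := Finset.mem_range.mp hi
      have e : p - 1 = (p - 1 - i) + i := by omega
      calc ((1 / (2 * (p : ℝ))) * Q) ^ (p - 1)
          = ((1 / (2 * (p : ℝ))) * Q) ^ (p - 1 - i) * ((1 / (2 * (p : ℝ))) * Q) ^ i := by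
            rw [← pow_add, ← e]
        _ ≤ _ := by
            have ha0 : 0 < (a:ℝ) := hc0.trans ha1
            gcongr
    have hd : ((a:ℝ) - b) * Q ^ (p - 2) < 1 / (2 * (p:ℝ)) ^ p * Q ^ (p - 1) := by
      have e : p - 1 = (p - 2) + 1 := by omega
      have : (a:ℝ) - b < 1 / (2 * (p:ℝ)) ^ p * Q := by
        rw [mul_pow]; linarith
      rw [e, pow_succ]
      have := mul_lt_mul_of_pos_right this (pow_pos hQ0 (p - 2))
      linarith
    have hv : (p:ℝ) * ((1 / (2 * (p : ℝ))) * Q) ^ (p - 1)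
        = 2 * (p:ℝ)^2 / (2 * (p:ℝ)) ^ p * Q ^ (p - 1) := by
      have e : (2 * (p:ℝ)) ^ p = (2 * (p:ℝ)) ^ (p - 1) * (2 * p) := by
        rw [← pow_succ]; congr 1; omega
      have hne : (p:ℝ) ≠ 0 := by linarith
      rw [e, mul_pow, div_pow, one_pow]
      field_simp
    push_cast
    rw [h2, sub_div, sub_mul]
    linarith
  refine ⟨main, fun h => ⟨fun h' => ?_, fun h' => ?_⟩⟩
  · rw [h'] at main
    simp at main
    linarith
  · rw [h'] at main
    simp at main
    linarith
end

section
/- Let p ≥ 5 be a prime and q a prime number. Let a and b be integers with (1/(2p))·q^{p/(p−2)} < a, b < (1/(2p) + 1/(2^p·p^p))·q^{p/(p−2)} (inequalities of real numbers). Suppose that f_q(a,b) is squarefree and that ((2p² − 1)/(2p)^p)·q^{p(p−1)/(p−2)} > p. Then g(a,b) − (a−b)q^p does not divide g(a,b) + (a−b)q^p. -/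
open scoped BigOperators

theorem stmt_10 (p q : ℕ) (hp : p.Prime) (hp5 : 5 ≤ p) (hq : q.Prime) (a b : ℤ)
    (ha1 : (1 / (2 * (p : ℝ))) * (q : ℝ) ^ ((p : ℝ) / ((p : ℝ) - 2)) < (a : ℝ))
    (ha2 : (a : ℝ) < (1 / (2 * (p : ℝ)) + 1 / (2 ^ p * (p : ℝ) ^ p)) *
      (q : ℝ) ^ ((p : ℝ) / ((p : ℝ) - 2)))
    (hb1 : (1 / (2 * (p : ℝ))) * (q : ℝ) ^ ((p : ℝ) / ((p : ℝ) - 2)) < (b : ℝ))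
    (hb2 : (b : ℝ) < (1 / (2 * (p : ℝ)) + 1 / (2 ^ p * (p : ℝ) ^ p)) *
      (q : ℝ) ^ ((p : ℝ) / ((p : ℝ) - 2)))
    (hsf : Squarefree (fPoly p (q : ℤ) a b))
    (hbig : (p : ℝ) < ((2 * (p : ℝ) ^ 2 - 1) / (2 * (p : ℝ)) ^ p) *
      (q : ℝ) ^ (((p : ℝ) * ((p : ℝ) - 1)) / ((p : ℝ) - 2))) :
    ¬ (gPoly p a b - (a - b) * (q : ℤ) ^ p ∣ gPoly p a b + (a - b) * (q : ℤ) ^ p) := by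
  intro hdvd
  have hq0 : (0 : ℝ) < (q : ℝ) := by exact_mod_cast hq.pos
  have hp5' : (5 : ℝ) ≤ (p : ℝ) := by exact_mod_cast hp5
  have hp2 : (p : ℝ) - 2 ≠ 0 := by linarith
  set Q : ℝ := (q : ℝ) ^ ((p : ℝ) / ((p : ℝ) - 2)) with hQ
  have hQ0 : 0 < Q := Real.rpow_pos_of_pos hq0 _
  have hQ1 : (q : ℝ) ^ (((p : ℝ) * ((p : ℝ) - 1)) / ((p : ℝ) - 2)) = Q ^ (p - 1) := by
    rw [hQ, ← Real.rpow_natCast, ← Real.rpow_mul hq0.le, Nat.cast_sub (by omega)]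
    congr 1
    push_cast
    ring
  have hQ2 : (q : ℝ) ^ p = Q ^ (p - 2) := by
    rw [hQ, ← Real.rpow_natCast, ← Real.rpow_natCast, ← Real.rpow_mul hq0.le,
      Nat.cast_sub (by omega)]
    congr 1
    push_cast
    field_simp
  rw [hQ1] at hbig
  obtain ⟨n, rfl⟩ : ∃ n, p = n + 2 := ⟨p - 2, by omega⟩
  set P : ℝ := ((n + 2 : ℕ) : ℝ) with hP
  have e1 : n + 2 - 1 = n + 1 := by omega
  have e2 : n + 2 - 2 = n := by omega
  rw [e1] at hbig
  rw [e2] at hQ2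
  have hP0 : 0 < P := by linarith
  set m : ℝ := 1 / (2 * P) * Q with hm
  have hm0 : 0 < m := by positivity
  set c : ℝ := Q ^ (n + 1) / (2 * P) ^ (n + 2) with hc
  have hc0 : 0 < c := by positivity
  have hbig' : P < (2 * P ^ 2 - 1) * c := by
    refine hbig.trans_eq ?_
    rw [hc]; ring
  have hg : 2 * P ^ 2 * c ≤ (gPoly (n + 2) a b : ℝ) := by
    have h1 : 2 * P ^ 2 * c = ∑ i ∈ Finset.range (n + 2), m ^ (n + 1) := by
      rw [Finset.sum_const, Finset.card_range, nsmul_eq_mul, ← hP, hc, hm, mul_pow (1 / (2 * P)) Q, div_pow, one_pow,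
        pow_succ (2 * P) (n + 1)]
      have : (2 * P) ^ (n + 1) ≠ 0 := by positivity
      generalize (2 * P) ^ (n + 1) = X at *
      field_simp
    rw [h1, gPoly]
    push_cast
    apply Finset.sum_le_sum
    intro i hi
    have hi' : i < n + 2 := Finset.mem_range.mp hi
    have h2 : m ^ (n + 1) = m ^ (n + 2 - 1 - i) * m ^ i := by
      rw [← pow_add]; congr 1; omega
    rw [h2, e1]
    have ha0 : (0 : ℝ) < a := hm0.trans ha1
    have hb0 : (0 : ℝ) < b := hm0.trans hb1
    gcongr
  have hd : |((a : ℝ) - b) * (q : ℝ) ^ (n + 2)| < c := by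
    rw [abs_mul, abs_of_pos (pow_pos hq0 _), hQ2]
    have h3 : |(a : ℝ) - b| < 1 / (2 ^ (n + 2) * P ^ (n + 2)) * Q := by
      rw [abs_lt]
      constructor <;> linarith
    have h4 : c = 1 / (2 ^ (n + 2) * P ^ (n + 2)) * Q * Q ^ n := by
      rw [hc, mul_pow]; ring
    rw [h4]
    exact mul_lt_mul_of_pos_right h3 (pow_pos hQ0 _)
  have hPP : 50 * c ≤ 2 * P ^ 2 * c := by
    apply mul_le_mul_of_nonneg_right _ hc0.le
    nlinarith
  rw [abs_lt] at hd
  have hz : 2 * ((a - b) * (q : ℤ) ^ (n + 2)) = 0 := by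
    apply Int.eq_zero_of_abs_lt_dvd
      (m := gPoly (n + 2) a b - (a - b) * (q : ℤ) ^ (n + 2))
    · have := dvd_sub hdvd (dvd_refl (gPoly (n + 2) a b - (a - b) * (q : ℤ) ^ (n + 2)))
      rwa [show gPoly (n + 2) a b + (a - b) * (q : ℤ) ^ (n + 2) -
        (gPoly (n + 2) a b - (a - b) * (q : ℤ) ^ (n + 2)) =
        2 * ((a - b) * (q : ℤ) ^ (n + 2)) by ring] at this
    · have : ((|2 * ((a - b) * (q : ℤ) ^ (n + 2))| : ℤ) : ℝ) <
        ((gPoly (n + 2) a b - (a - b) * (q : ℤ) ^ (n + 2) : ℤ) : ℝ) := by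
        push_cast
        rw [abs_lt]
        constructor <;> linarith
      exact_mod_cast this
  have hqz : (q : ℤ) ^ (n + 2) ≠ 0 := pow_ne_zero _ (by exact_mod_cast hq.ne_zero)
  have hab : a = b := by
    have h5 : (a - b) * (q : ℤ) ^ (n + 2) = 0 := by omega
    rcases mul_eq_zero.mp h5 with h | h
    · omega
    · exact absurd h hqz
  subst hab
  have hgg : gPoly (n + 2) a a = ((n + 2 : ℕ) : ℤ) * a ^ (n + 1) := by
    rw [gPoly, ← nsmul_eq_mul, ← Finset.card_range (n + 2), ← Finset.sum_const,
      Finset.card_range]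
    apply Finset.sum_congr rfl
    intro i hi
    have hi' : i < n + 2 := Finset.mem_range.mp hi
    rw [← pow_add]; congr 1; omega
  have ha0 : 0 < a := by
    have : (0 : ℝ) < a := hm0.trans ha1
    exact_mod_cast this
  have hu : IsUnit a := by
    apply hsf a
    refine ⟨4 * a ^ n * (q : ℤ) ^ (n + 2) - ((n + 2 : ℕ) : ℤ) ^ 2 * (a ^ n) ^ 2, ?_⟩
    rw [fPoly, hgg]
    ring
  have ha1' : a = 1 := by
    rcases Int.isUnit_iff.mp hu with h | h <;> omega
  rw [hgg, ha1'] at hg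
  push_cast at hg
  rw [hP] at *
  push_cast at *
  simp only [one_pow, mul_one] at hg
  linarith
end

section
/- Let p ≥ 5 be a prime. For every ε > 0 there exists a constant C > 0 such that for every prime number q, the number of quadruples of integers (a₁, b₁, a₂, b₂), all four lying strictly between (1/(2p))·q^{p/(p−2)} and (1/(2p) + 1/(2^p·p^p))·q^{p/(p−2)} (inequalities of real numbers), satisfying f_q(a₁, b₁) = f_q(a₂, b₂), is at most C·q^{2p/(p−2) + ε}. -/
open scoped BigOperators

/-- The condition that an integer lies strictly between
`(1/(2p))·q^{p/(p−2)}` and `(1/(2p) + 1/(2^p·p^p))·q^{p/(p−2)}`. -/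
def InRange (p q : ℕ) (a : ℤ) : Prop :=
  (1 / (2 * (p : ℝ))) * (q : ℝ) ^ ((p : ℝ) / ((p : ℝ) - 2)) < (a : ℝ) ∧
  (a : ℝ) < (1 / (2 * (p : ℝ)) + 1 / (2 ^ p * (p : ℝ) ^ p)) *
    (q : ℝ) ^ ((p : ℝ) / ((p : ℝ) - 2))

lemma aux_divisor_bound (δ : ℝ) (hδ : 0 < δ) :
    ∃ C : ℝ, 0 < C ∧ ∀ n : ℕ, n ≠ 0 → ((n.divisors.card : ℕ) : ℝ) ≤ C * (n : ℝ) ^ δ := by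
  set M : ℝ := 1 + 1 / (δ * Real.log 2) with hM
  have hl2 : 0 < Real.log 2 := Real.log_pos (by norm_num)
  have hM1 : 1 ≤ M := by
    have : 0 ≤ 1 / (δ * Real.log 2) := by positivity
    linarith
  set B : ℕ := ⌈(2 : ℝ) ^ (1 / δ)⌉₊ with hB
  refine ⟨M ^ B, by positivity, fun n hn => ?_⟩
  have key : ∀ r ∈ n.primeFactors, ((n.factorization r : ℝ) + 1) ≤
      (if r < B then M else 1) * ((r : ℝ) ^ n.factorization r) ^ δ := by
    intro r hr
    have hrp := Nat.prime_of_mem_primeFactors hr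
    have hr2 : (2 : ℝ) ≤ r := by exact_mod_cast hrp.two_le
    set e := n.factorization r
    have hcomm : ((r : ℝ) ^ e) ^ δ = ((r : ℝ) ^ δ) ^ e := by
      rw [← Real.rpow_natCast, ← Real.rpow_natCast, ← Real.rpow_mul (by positivity),
        ← Real.rpow_mul (by positivity), mul_comm]
    split_ifs with h
    · have h1 : 1 + (e : ℝ) * (δ * Real.log 2) ≤ ((r : ℝ) ^ e) ^ δ := by
        have h2 : ((2 : ℝ) ^ e) ^ δ ≤ ((r : ℝ) ^ e) ^ δ := by gcongr
        refine le_trans ?_ h2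
        rw [← Real.rpow_natCast, ← Real.rpow_mul (by positivity),
          Real.rpow_def_of_pos (by norm_num)]
        have := Real.add_one_le_exp (Real.log 2 * ((e : ℝ) * δ))
        linarith
      have h3 : M * (1 + (e : ℝ) * (δ * Real.log 2)) =
          1 + e + (1 / (δ * Real.log 2) + (e : ℝ) * (δ * Real.log 2)) := by
        rw [hM]; field_simp; ring
      have h4 : 0 ≤ (1 / (δ * Real.log 2) + (e : ℝ) * (δ * Real.log 2)) := by positivity
      calc (e : ℝ) + 1 ≤ M * (1 + (e : ℝ) * (δ * Real.log 2)) := by linarith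
        _ ≤ _ := by gcongr
    · have h1 : (2 : ℝ) ≤ (r : ℝ) ^ δ := by
        have h2 : (2 : ℝ) ^ (1 / δ) ≤ r :=
          (Nat.le_ceil _).trans (by exact_mod_cast not_lt.mp h)
        calc (2 : ℝ) = ((2 : ℝ) ^ (1 / δ)) ^ δ := by
              rw [← Real.rpow_mul (by norm_num)]; field_simp; simp
          _ ≤ _ := by gcongr
      rw [one_mul, hcomm]
      calc (e : ℝ) + 1 ≤ 2 ^ e := by exact_mod_cast Nat.lt_two_pow_self
        _ ≤ _ := by gcongr
  rw [Nat.card_divisors hn]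
  push_cast
  refine (Finset.prod_le_prod (fun _ _ => by positivity) key).trans ?_
  rw [Finset.prod_mul_distrib]
  have hn' : ∏ r ∈ n.primeFactors, ((r : ℝ) ^ n.factorization r) ^ δ = (n : ℝ) ^ δ := by
    rw [Real.finsetProd_rpow _ _ (fun _ _ => by positivity)]
    congr 1
    have := Nat.prod_factorization_pow_eq_self hn
    rw [Finsupp.prod, Nat.support_factorization] at this
    exact_mod_cast this
  rw [hn']
  gcongr
  rw [Finset.prod_ite]
  simp only [Finset.prod_const, one_pow, mul_one]
  apply pow_le_pow_right₀ hM1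
  calc _ ≤ (Finset.range B).card := by
        apply Finset.card_le_card
        intro r hr
        simp at hr ⊢
        exact hr.2
    _ = B := by simp

def auxX (p : ℕ) (q a b : ℤ) : ℤ := gPoly p a b + (a - b) * q ^ p

lemma aux_f (p : ℕ) (q a b : ℤ) :
    fPoly p q a b = 4 * a ^ p * q ^ p - auxX p q a b ^ 2 := by
  have h : gPoly p a b * (b - a) = b ^ p - a ^ p := by
    rw [← geom_sum₂_mul, gPoly]
    congr 1
    exact Finset.sum_congr rfl fun i _ => mul_comm _ _
  unfold fPoly auxX
  have : q ^ (2 * p) = (q ^ p) ^ 2 := by rw [mul_comm, pow_mul]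
  rw [this]
  linear_combination (-2 * q ^ p) * h

open Polynomial in
lemma aux_roots (p : ℕ) (hp5 : 5 ≤ p) (q a x : ℤ) (I : Finset ℤ) :
    (I.filter (fun b => auxX p q a b = x)).card ≤ p := by
  set P : ℤ[X] := (∑ i ∈ Finset.range p, C (a ^ (p - 1 - i)) * X ^ i) +
    (C (a * q ^ p - x) - C (q ^ p) * X) with hP
  have hc : P.coeff (p - 1) = 1 := by
    have h0 : p - 1 ≠ 0 := by omega
    have h1 : (1 : ℕ) ≠ p - 1 := by omega
    rw [hP]
    simp only [coeff_add, finsetSum_coeff, coeff_sub, coeff_C_mul, coeff_X_pow, coeff_X,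
      coeff_C, h0, h1, if_false]
    rw [Finset.sum_eq_single (p - 1)]
    · simp
    · intro b _ hb
      simp [hb.symm]
    · intro h
      exact absurd (Finset.mem_range.mpr (by omega)) h
  have hP0 : P ≠ 0 := by
    intro h
    rw [h] at hc
    simp at hc
  have hdeg : P.natDegree ≤ p := by
    rw [hP]
    refine natDegree_add_le_of_degree_le ?_ ?_
    · apply natDegree_sum_le_of_forall_le
      intro i hi
      exact (natDegree_C_mul_X_pow_le _ _).trans (Finset.mem_range.mp hi).le
    · refine (natDegree_sub_le _ _).trans ?_
      rw [natDegree_C]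
      have := natDegree_C_mul_X_pow_le (q ^ p) 1
      rw [pow_one] at this
      simp only [max_le_iff]
      omega
  calc _ ≤ P.roots.toFinset.card := by
        apply Finset.card_le_card
        intro b hb
        simp only [Finset.mem_filter] at hb
        rw [Multiset.mem_toFinset, mem_roots hP0, IsRoot, hP]
        simp only [eval_add, eval_finsetSum, eval_mul, eval_C, eval_pow, eval_X, eval_sub]
        have := hb.2
        unfold auxX gPoly at this
        linarith
    _ ≤ P.roots.card := Multiset.toFinset_card_le _
    _ ≤ P.natDegree := card_roots' _
    _ ≤ p := hdeg

lemma aux_eq (p : ℕ) (hp5 : 5 ≤ p) (q a : ℤ) (I : Finset ℤ) :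
    ((I ×ˢ I).filter (fun b => fPoly p q a b.1 = fPoly p q a b.2)).card ≤ 2 * p * I.card := by
  refine (Finset.card_le_mul_card_image (f := Prod.fst) _ (2 * p) ?_).trans ?_
  · intro c _
    calc _ ≤ (((I.filter (fun b => auxX p q a b = auxX p q a c)) ∪
          (I.filter (fun b => auxX p q a b = - auxX p q a c))).image (fun b => (c, b))).card := by
          apply Finset.card_le_card
          rintro ⟨b1, b2⟩ h
          simp only [Finset.mem_filter, Finset.mem_product, Finset.mem_image,
            Finset.mem_union] at h ⊢
          obtain ⟨⟨⟨h1, h2⟩, h3⟩, rfl⟩ := h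
          refine ⟨b2, ?_, rfl⟩
          rw [aux_f, aux_f] at h3
          have : auxX p q a b2 ^ 2 = auxX p q a b1 ^ 2 := by linarith
          rcases sq_eq_sq_iff_eq_or_eq_neg.mp this with h | h
          · exact Or.inl ⟨h2, h⟩
          · exact Or.inr ⟨h2, h⟩
      _ ≤ _ := Finset.card_image_le
      _ ≤ _ := Finset.card_union_le _ _
      _ ≤ p + p := add_le_add (aux_roots p hp5 _ _ _ _) (aux_roots p hp5 _ _ _ _)
      _ = 2 * p := by ring
  · gcongr
    intro c hc
    simp only [Finset.mem_filter, Finset.mem_product, Finset.mem_image] at hc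
    obtain ⟨b, hb, rfl⟩ := hc
    exact hb.1.1

lemma aux_ne (p : ℕ) (hp5 : 5 ≤ p) (q a a' : ℤ) (I : Finset ℤ)
    (hn : 4 * (a ^ p - a' ^ p) * q ^ p ≠ 0) :
    ((I ×ˢ I).filter (fun b => fPoly p q a b.1 = fPoly p q a' b.2)).card ≤
      p * p * (2 * (4 * (a ^ p - a' ^ p) * q ^ p).natAbs.divisors.card) := by
  set n := 4 * (a ^ p - a' ^ p) * q ^ p with hndef
  have hfac : ∀ b1 b2, fPoly p q a b1 = fPoly p q a' b2 →
      (auxX p q a b1 - auxX p q a' b2) * (auxX p q a b1 + auxX p q a' b2) = n := by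
    intro b1 b2 h
    rw [aux_f, aux_f] at h
    rw [hndef]
    linarith
  refine (Finset.card_le_mul_card_image
    (f := fun b : ℤ × ℤ => auxX p q a b.1 - auxX p q a' b.2) _ (p * p) ?_).trans ?_
  · intro u hu
    rw [Finset.mem_image] at hu
    obtain ⟨⟨c1, c2⟩, hc, hu⟩ := hu
    simp only [Finset.mem_filter] at hc
    have hcn := hfac _ _ hc.2
    simp only at hu
    rw [hu] at hcn
    have hu0 : u ≠ 0 := by
      rintro rfl
      exact hn (by rw [← hcn]; ring)
    calc _ ≤ ((I.filter (fun b => auxX p q a b = auxX p q a c1)) ×ˢ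
          (I.filter (fun b => auxX p q a' b = auxX p q a' c2))).card := by
          apply Finset.card_le_card
          rintro ⟨b1, b2⟩ h
          simp only [Finset.mem_filter, Finset.mem_product] at h ⊢
          obtain ⟨⟨⟨h1, h2⟩, h3⟩, h4⟩ := h
          have hbn := hfac _ _ h3
          rw [h4, ← hcn] at hbn
          have := mul_left_cancel₀ hu0 hbn
          refine ⟨⟨h1, by linarith⟩, ⟨h2, by linarith⟩⟩
      _ ≤ p * p := by
          rw [Finset.card_product]
          exact Nat.mul_le_mul (aux_roots p hp5 _ _ _ _) (aux_roots p hp5 _ _ _ _)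
  · gcongr
    calc _ ≤ ((n.natAbs.divisors.image (fun d : ℕ => (d : ℤ))) ∪
          (n.natAbs.divisors.image (fun d : ℕ => -(d : ℤ)))).card := by
          apply Finset.card_le_card
          intro u hu
          rw [Finset.mem_image] at hu
          obtain ⟨⟨c1, c2⟩, hc, hu⟩ := hu
          simp only [Finset.mem_filter] at hc
          have hcn := hfac _ _ hc.2
          simp only at hu
          rw [hu] at hcn
          have hd : u.natAbs ∈ n.natAbs.divisors := by
            rw [Nat.mem_divisors]
            exact ⟨Int.natAbs_dvd_natAbs.mpr ⟨_, hcn.symm⟩, by simpa using hn⟩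
          rw [Finset.mem_union, Finset.mem_image, Finset.mem_image]
          rcases Int.natAbs_eq u with h | h
          · exact Or.inl ⟨_, hd, h.symm⟩
          · exact Or.inr ⟨_, hd, h.symm⟩
      _ ≤ _ := Finset.card_union_le _ _
      _ ≤ _ := add_le_add Finset.card_image_le Finset.card_image_le
      _ = _ := by ring

theorem stmt_12 (p : ℕ) (hp : p.Prime) (hp5 : 5 ≤ p) (ε : ℝ) (hε : 0 < ε) :
    ∃ C : ℝ, 0 < C ∧ ∀ q : ℕ, q.Prime →
      ({t : ℤ × ℤ × ℤ × ℤ | InRange p q t.1 ∧ InRange p q t.2.1 ∧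
          InRange p q t.2.2.1 ∧ InRange p q t.2.2.2 ∧
          fPoly p (q : ℤ) t.1 t.2.1 = fPoly p (q : ℤ) t.2.2.1 t.2.2.2}.ncard : ℝ) ≤
        C * (q : ℝ) ^ ((2 * (p : ℝ)) / ((p : ℝ) - 2) + ε) := by
  have hp5' : (5 : ℝ) ≤ p := by exact_mod_cast hp5
  set α : ℝ := (p : ℝ) / ((p : ℝ) - 2) with hα
  have hα0 : 0 < α := div_pos (by linarith) (by linarith)
  set K : ℝ := 2 + α * p + p with hK
  have hK0 : 0 < K := by positivity
  obtain ⟨C, hC, hdiv⟩ := aux_divisor_bound (ε / K) (by positivity)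
  refine ⟨2 * p ^ 2 * C + 2 * p, by positivity, fun q hq => ?_⟩
  have hq2 : (2 : ℝ) ≤ q := by exact_mod_cast hq.two_le
  have hq0 : (0 : ℝ) < q := by linarith
  set Q : ℝ := (q : ℝ) ^ α with hQ
  have hQ0 : 0 < Q := by positivity
  set I : Finset ℤ := Finset.Icc 1 ⌊Q⌋ with hI
  have hIcard : (I.card : ℝ) ≤ Q := by
    have h0 : 0 ≤ ⌊Q⌋ := Int.floor_nonneg.mpr hQ0.le
    have h1 : ((I.card : ℤ)) = ⌊Q⌋ := by
      rw [hI, Int.card_Icc]; simp [h0]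
    have h2 : (I.card : ℝ) = ((⌊Q⌋ : ℤ) : ℝ) := by exact_mod_cast congrArg (Int.cast : ℤ → ℝ) h1
    rw [h2]
    exact Int.floor_le Q
  have hmem : ∀ a, InRange p q a → a ∈ I := by
    rintro a ⟨h1, h2⟩
    rw [← hα, ← hQ] at h1 h2
    have h3 : (0 : ℝ) < a := lt_trans (by positivity) h1
    have h4 : (0 : ℤ) < a := by exact_mod_cast h3
    rw [hI, Finset.mem_Icc]
    refine ⟨h4, Int.le_floor.mpr (h2.le.trans ?_)⟩
    have h5 : 1 / (2 * (p : ℝ)) ≤ 1 / 2 := by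
      apply one_div_le_one_div_of_le <;> linarith
    have h6 : 1 / (2 ^ p * (p : ℝ) ^ p) ≤ 1 / 2 := by
      apply one_div_le_one_div_of_le (by norm_num)
      have h7 : (2 : ℝ) ≤ 2 ^ p := le_self_pow₀ (by norm_num) (by omega)
      have h8 : (1 : ℝ) ≤ (p : ℝ) ^ p := one_le_pow₀ (by linarith)
      nlinarith
    have : (1 / (2 * (p : ℝ)) + 1 / (2 ^ p * (p : ℝ) ^ p)) ≤ 1 := by linarith
    nlinarith
  set G : ℤ × ℤ → Finset (ℤ × ℤ) := fun a =>
    (I ×ˢ I).filter (fun b => fPoly p q a.1 b.1 = fPoly p q a.2 b.2) with hG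
  set F : Finset (ℤ × ℤ × ℤ × ℤ) := ((I ×ˢ I).sigma G).image
    (fun t => (t.1.1, t.2.1, t.1.2, t.2.2)) with hF
  have hsub : {t : ℤ × ℤ × ℤ × ℤ | InRange p q t.1 ∧ InRange p q t.2.1 ∧
          InRange p q t.2.2.1 ∧ InRange p q t.2.2.2 ∧
          fPoly p (q : ℤ) t.1 t.2.1 = fPoly p (q : ℤ) t.2.2.1 t.2.2.2} ⊆ (F : Set _) := by
    rintro ⟨a1, b1, a2, b2⟩ ⟨h1, h2, h3, h4, h5⟩
    rw [Finset.mem_coe, hF, Finset.mem_image]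
    refine ⟨⟨(a1, a2), (b1, b2)⟩, ?_, rfl⟩
    simp only [Finset.mem_sigma, hG, Finset.mem_filter, Finset.mem_product]
    exact ⟨⟨hmem _ h1, hmem _ h3⟩, ⟨hmem _ h2, hmem _ h4⟩, h5⟩
  have hcard : {t : ℤ × ℤ × ℤ × ℤ | InRange p q t.1 ∧ InRange p q t.2.1 ∧
          InRange p q t.2.2.1 ∧ InRange p q t.2.2.2 ∧
          fPoly p (q : ℤ) t.1 t.2.1 = fPoly p (q : ℤ) t.2.2.1 t.2.2.2}.ncard ≤
        ∑ a ∈ I ×ˢ I, (G a).card := by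
    refine (Set.ncard_le_ncard hsub (Finset.finite_toSet F)).trans ?_
    rw [Set.ncard_coe_finset, ← Finset.card_sigma]
    exact Finset.card_image_le
  have hqε1 : 1 ≤ (q : ℝ) ^ ε := Real.one_le_rpow (by linarith) hε.le
  have hterm : ∀ a ∈ I ×ˢ I, ((G a).card : ℝ) ≤
      2 * p ^ 2 * (C * (q : ℝ) ^ ε) + (if a.1 = a.2 then 2 * p * Q else 0) := by
    rintro ⟨a1, a2⟩ ha
    simp only [Finset.mem_product, hI, Finset.mem_Icc] at ha
    obtain ⟨⟨h1, h2⟩, h3, h4⟩ := ha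
    by_cases h : a1 = a2
    · subst h
      simp only [if_true]
      have := aux_eq p hp5 q a1 I
      have h5 : ((G (a1, a1)).card : ℝ) ≤ 2 * p * I.card := by exact_mod_cast this
      have h6 : (2 * p * I.card : ℝ) ≤ 2 * p * Q := by gcongr
      have h7 : 0 ≤ 2 * (p : ℝ) ^ 2 * (C * (q : ℝ) ^ ε) := by positivity
      linarith
    · simp only [h, if_false, add_zero]
      have hne : 4 * (a1 ^ p - a2 ^ p) * (q : ℤ) ^ p ≠ 0 := by
        have h5 : a1 ^ p - a2 ^ p ≠ 0 := by
          intro h6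
          exact h ((pow_left_inj₀ (by linarith) (by linarith) (by omega)).mp (sub_eq_zero.mp h6))
        have h6 : (q : ℤ) ≠ 0 := by exact_mod_cast hq.ne_zero
        positivity
      have h5 := aux_ne p hp5 q a1 a2 I hne
      set n := (4 * (a1 ^ p - a2 ^ p) * (q : ℤ) ^ p).natAbs with hn
      have h6 : ((G (a1, a2)).card : ℝ) ≤ p * p * (2 * n.divisors.card) := by exact_mod_cast h5
      have hn0 : n ≠ 0 := by simpa [hn] using hne
      have h7 := hdiv n hn0
      have hpb : ∀ a : ℤ, 1 ≤ a → a ≤ ⌊Q⌋ → 0 ≤ (a : ℝ) ^ p ∧ (a : ℝ) ^ p ≤ Q ^ p := by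
        intro a ha hb
        have hb' : (a : ℝ) ≤ Q := Int.le_floor.mp hb
        have ha' : (0 : ℝ) ≤ a := by exact_mod_cast (by linarith : (0 : ℤ) ≤ a)
        exact ⟨by positivity, by gcongr⟩
      have hnK : (n : ℝ) ≤ (q : ℝ) ^ K := by
        have e1 : (n : ℝ) = |4 * ((a1 : ℝ) ^ p - (a2 : ℝ) ^ p) * (q : ℝ) ^ p| := by
          rw [hn, Nat.cast_natAbs]; push_cast; rfl
        have e2 : (q : ℝ) ^ K = (q : ℝ) ^ 2 * Q ^ p * (q : ℝ) ^ p := by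
          rw [hK, Real.rpow_add hq0, Real.rpow_add hq0, Real.rpow_mul hq0.le,
            Real.rpow_natCast, Real.rpow_natCast]
          norm_num [hQ]
        rw [e1, e2, abs_mul, abs_mul, abs_of_pos (by positivity : (0 : ℝ) < (q : ℝ) ^ p)]
        have e3 : |(a1 : ℝ) ^ p - (a2 : ℝ) ^ p| ≤ Q ^ p := by
          have := hpb a1 h1 h2
          have := hpb a2 h3 h4
          rw [abs_le]; constructor <;> linarith
        have e4 : |(4 : ℝ)| ≤ (q : ℝ) ^ 2 := by
          rw [abs_of_pos (by norm_num)]; nlinarith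
        gcongr
      have h8 : (n : ℝ) ^ (ε / K) ≤ (q : ℝ) ^ ε := by
        calc (n : ℝ) ^ (ε / K) ≤ ((q : ℝ) ^ K) ^ (ε / K) := by gcongr
          _ = (q : ℝ) ^ ε := by
            rw [← Real.rpow_mul hq0.le]; congr 1; field_simp
      calc ((G (a1, a2)).card : ℝ) ≤ p * p * (2 * n.divisors.card) := h6
        _ ≤ p * p * (2 * (C * (q : ℝ) ^ ε)) := by
          gcongr
          exact h7.trans (by gcongr)
        _ = _ := by ring
  have hdiag : ∑ a ∈ I ×ˢ I, (if a.1 = a.2 then 2 * (p : ℝ) * Q else 0) = I.card * (2 * p * Q) := by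
    rw [Finset.sum_product]
    simp
  have hexp : (q : ℝ) ^ ((2 * (p : ℝ)) / ((p : ℝ) - 2) + ε) = Q * Q * (q : ℝ) ^ ε := by
    have h2 : 2 * (p : ℝ) / ((p : ℝ) - 2) = α + α := by rw [hα]; ring
    rw [h2, Real.rpow_add hq0, Real.rpow_add hq0]
  rw [hexp]
  calc _ ≤ ((∑ a ∈ I ×ˢ I, (G a).card : ℕ) : ℝ) := by exact_mod_cast hcard
    _ = ∑ a ∈ I ×ˢ I, ((G a).card : ℝ) := by push_cast; rfl
    _ ≤ _ := Finset.sum_le_sum hterm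
    _ = I.card * I.card * (2 * p ^ 2 * (C * (q : ℝ) ^ ε)) + I.card * (2 * p * Q) := by
      rw [Finset.sum_add_distrib, hdiag, Finset.sum_const, Finset.card_product]
      simp
    _ ≤ Q * Q * (2 * p ^ 2 * (C * (q : ℝ) ^ ε)) + Q * (2 * p * Q) := by gcongr
    _ ≤ Q * Q * (2 * p ^ 2 * (C * (q : ℝ) ^ ε)) + Q * (2 * p * Q) * (q : ℝ) ^ ε := by
      refine add_le_add le_rfl ?_
      exact le_mul_of_one_le_right (by positivity) hqε1
    _ = _ := by ring
end

section
/- Let p ≥ 5 be a prime and q a positive integer. Let a and b be integers with (1/(2p))·q^{p/(p−2)} < a, b < (1/(2p) + 1/(2^p·p^p))·q^{p/(p−2)} (inequalities of real numbers). Then f_q(a,b) > 0, where f_q(a,b) = 2(a^p + b^p)q^p − (a−b)²q^{2p} − g(a,b)² and g(a,b) = Σ_{i=0}^{p−1} a^{p−1−i} b^{i}. -/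
open scoped BigOperators

lemma aux_real_s15 (n : ℕ) (c x y : ℝ) (hc : 0 < c) (hcp : 2 * ((n + 5 : ℕ) : ℝ) * c = 1)
    (hx1 : c < x) (hx2 : x < c + c ^ (n + 5)) (hy1 : c < y) (hy2 : y < c + c ^ (n + 5)) :
    0 < 2 * (x ^ (n + 5) + y ^ (n + 5)) - (x - y) ^ 2
      - (∑ i ∈ Finset.range (n + 5), x ^ (n + 5 - 1 - i) * y ^ i) ^ 2 := by
  have hc10 : c ≤ 1 / 10 := by
    have : (0 : ℝ) ≤ (n : ℝ) * c := by positivity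
    push_cast at hcp
    nlinarith
  have hd1 : c ^ (n + 5) ≤ c / 2 := by
    have h1 : c ^ (n + 4) ≤ c ^ 1 := pow_le_pow_of_le_one hc.le (by linarith) (by omega)
    have : c ^ (n + 5) = c ^ (n + 4) * c := by ring
    nlinarith
  have hx : c ^ (n + 5) < x ^ (n + 5) := pow_lt_pow_left₀ hx1 hc.le (by omega)
  have hy : c ^ (n + 5) < y ^ (n + 5) := pow_lt_pow_left₀ hy1 hc.le (by omega)
  have hd0 : 0 < c ^ (n + 5) := by positivity
  have hxy : (x - y) ^ 2 ≤ c ^ (n + 5) := by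
    have : (x - y) ^ 2 ≤ (c ^ (n + 5)) ^ 2 := sq_le_sq' (by linarith) (by linarith)
    nlinarith
  have hg0 : 0 ≤ ∑ i ∈ Finset.range (n + 5), x ^ (n + 5 - 1 - i) * y ^ i :=
    Finset.sum_nonneg fun i _ => mul_nonneg (pow_nonneg (by linarith) _) (pow_nonneg (by linarith) _)
  have hg : ∑ i ∈ Finset.range (n + 5), x ^ (n + 5 - 1 - i) * y ^ i
      ≤ ((n + 5 : ℕ) : ℝ) * (3 / 2 * c) ^ (n + 4) := by
    have := Finset.sum_le_card_nsmul (Finset.range (n + 5))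
      (fun i => x ^ (n + 5 - 1 - i) * y ^ i) ((3 / 2 * c) ^ (n + 4)) (by
        intro i hi
        have hi' := Finset.mem_range.1 hi
        have e : (3 / 2 * c) ^ (n + 4) = (3 / 2 * c) ^ (n + 5 - 1 - i) * (3 / 2 * c) ^ i := by
          rw [← pow_add]; congr 1; omega
        rw [e]
        have hx0 : 0 ≤ x := by linarith
        have hy0 : 0 ≤ y := by linarith
        have h1 : x ≤ 3 / 2 * c := by linarith
        have h2 : y ≤ 3 / 2 * c := by linarith
        gcongr)
    simpa [nsmul_eq_mul] using this
  have hg2 : (∑ i ∈ Finset.range (n + 5), x ^ (n + 5 - 1 - i) * y ^ i) ^ 2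
      ≤ (((n + 5 : ℕ) : ℝ) * (3 / 2 * c) ^ (n + 4)) ^ 2 := pow_le_pow_left₀ hg0 hg 2
  have e2 : (((n + 5 : ℕ) : ℝ) * (3 / 2 * c) ^ (n + 4)) ^ 2
      = (2 * ((n + 5 : ℕ) : ℝ) * c) ^ 2 / 4 * (729 / 64) * (9 / 4 * c) ^ (n + 1) * c ^ (n + 5) := by
    have : (9 / 4 : ℝ) = (3 / 2) ^ 2 := by norm_num
    rw [this]
    simp only [mul_pow, ← pow_mul]
    ring
  rw [e2, hcp] at hg2
  have h3 : (9 / 4 * c) ^ (n + 1) ≤ 9 / 40 := by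
    calc (9 / 4 * c) ^ (n + 1) ≤ (9 / 4 * c) ^ 1 :=
          pow_le_pow_of_le_one (by positivity) (by linarith) (by omega)
      _ ≤ 9 / 40 := by rw [pow_one]; linarith
  have h4 : (9 / 4 * c) ^ (n + 1) * c ^ (n + 5) ≤ 9 / 40 * c ^ (n + 5) := by gcongr
  nlinarith

theorem stmt_15 (p q : ℕ) (hp : p.Prime) (hp5 : 5 ≤ p) (hq : 0 < q) (a b : ℤ)
    (ha1 : (1 / (2 * (p : ℝ))) * (q : ℝ) ^ ((p : ℝ) / ((p : ℝ) - 2)) < (a : ℝ))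
    (ha2 : (a : ℝ) < (1 / (2 * (p : ℝ)) + 1 / (2 ^ p * (p : ℝ) ^ p)) *
      (q : ℝ) ^ ((p : ℝ) / ((p : ℝ) - 2)))
    (hb1 : (1 / (2 * (p : ℝ))) * (q : ℝ) ^ ((p : ℝ) / ((p : ℝ) - 2)) < (b : ℝ))
    (hb2 : (b : ℝ) < (1 / (2 * (p : ℝ)) + 1 / (2 ^ p * (p : ℝ) ^ p)) *
      (q : ℝ) ^ ((p : ℝ) / ((p : ℝ) - 2))) :
    0 < fPoly p (q : ℤ) a b := by
  obtain ⟨n, rfl⟩ : ∃ n, p = n + 5 := ⟨p - 5, by omega⟩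
  have hq' : (0 : ℝ) < q := by exact_mod_cast hq
  set Q : ℝ := (q : ℝ) ^ (((n + 5 : ℕ) : ℝ) / (((n + 5 : ℕ) : ℝ) - 2)) with hQ
  have hQ0 : 0 < Q := Real.rpow_pos_of_pos hq' _
  have hQp : Q ^ (n + 3) = (q : ℝ) ^ (n + 5) := by
    rw [hQ, ← Real.rpow_natCast, ← Real.rpow_mul hq'.le, ← Real.rpow_natCast]
    congr 1
    push_cast
    have : (n : ℝ) + 5 - 2 ≠ 0 := by
      have : (0 : ℝ) ≤ n := by positivity
      linarith
    field_simp
    ring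
  have hc : (0 : ℝ) < 1 / (2 * ((n + 5 : ℕ) : ℝ)) := by positivity
  have hd : 1 / (2 ^ (n + 5) * ((n + 5 : ℕ) : ℝ) ^ (n + 5))
      = (1 / (2 * ((n + 5 : ℕ) : ℝ))) ^ (n + 5) := by
    rw [one_div_pow, mul_pow]
  rw [hd] at ha2 hb2
  have key := aux_real_s15 n (1 / (2 * ((n + 5 : ℕ) : ℝ))) (a / Q) (b / Q) hc
    (by have : ((n + 5 : ℕ) : ℝ) ≠ 0 := by positivity
        field_simp)
    ((lt_div_iff₀ hQ0).2 ha1) ((div_lt_iff₀ hQ0).2 ha2)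
    ((lt_div_iff₀ hQ0).2 hb1) ((div_lt_iff₀ hQ0).2 hb2)
  obtain ⟨x, hx⟩ : ∃ x : ℝ, x = a / Q := ⟨_, rfl⟩
  obtain ⟨y, hy⟩ : ∃ y : ℝ, y = b / Q := ⟨_, rfl⟩
  rw [← hx, ← hy] at key
  have hax : (a : ℝ) = Q * x := by rw [hx]; field_simp
  have hby : (b : ℝ) = Q * y := by rw [hy]; field_simp
  have hgs : ((gPoly (n + 5) a b : ℤ) : ℝ)
      = Q ^ (n + 4) * ∑ i ∈ Finset.range (n + 5), x ^ (n + 5 - 1 - i) * y ^ i := by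
    unfold gPoly
    push_cast
    rw [Finset.mul_sum]
    refine Finset.sum_congr rfl fun i hi => ?_
    have hi' := Finset.mem_range.1 hi
    have e : Q ^ (n + 4) = Q ^ (n + 4 - i) * Q ^ i := by
      rw [← pow_add]; congr 1; omega
    have e5 : n + 5 - 1 - i = n + 4 - i := by omega
    try rw [e5]
    rw [hax, hby, e, mul_pow, mul_pow]
    ring
  generalize ∑ i ∈ Finset.range (n + 5), x ^ (n + 5 - 1 - i) * y ^ i = S at key hgs
  have hf : ((fPoly (n + 5) (q : ℤ) a b : ℤ) : ℝ) = Q ^ (2 * n + 8) *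
      (2 * (x ^ (n + 5) + y ^ (n + 5)) - (x - y) ^ 2
      - (S) ^ 2) := by
    unfold fPoly
    push_cast
    rw [hgs, hax, hby, mul_comm 2 (n + 5), pow_mul, ← hQp]
    simp only [mul_pow]
    ring
  have : (0 : ℝ) < ((fPoly (n + 5) (q : ℤ) a b : ℤ) : ℝ) := by
    rw [hf]; exact mul_pos (pow_pos hQ0 _) key
  exact_mod_cast this
end
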